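/- Assume for each n that the martingale differences (X_i)_{1≤i≤n} satisfy conditions (A1), (A2), and (A3) with max{δ_n, ε_n, κ_n} → 0 as n → ∞. Let (a_n) be a sequence of real numbers with a_n → ∞ and a_n ε_n → 0 as n → ∞. Then for every Borel set B ⊆ ℝ, − inf_{x ∈ B°} x²/2 ≤ liminf_{n→∞} (1/a_n²) ln P( W_n / a_n ∈ B ) ≤ limsup_{n→∞} (1/a_n²) ln P( W_n / a_n ∈ B ) ≤ − inf_{x ∈ B̄} x²/2, where B° and B̄ denote the interior and the closure of B. -/

import Mathlib

open MeasureTheory Filter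
open scoped Topology ENNReal

noncomputable def stdNormalCDF (x : ℝ) : ℝ :=
  (Real.sqrt (2 * Real.pi))⁻¹ * ∫ t in Set.Iic x, Real.exp (-(t ^ 2) / 2)

/-- A finite sequence of square-integrable martingale differences
`X 1, ..., X n` adapted to a filtration `F 0 ⊆ F 1 ⊆ ... ⊆ F n`, with
`F 0` trivial, `E[X i | F (i-1)] = 0` and `0 < E[(X i)^2] < ∞`. -/
structure MDS (Ω : Type) [mΩ : MeasurableSpace Ω] (P : Measure Ω) where
  n : ℕ
  npos : 0 < n
  F : ℕ → MeasurableSpace Ω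
  F_mono : Monotone F
  F_le : ∀ i, F i ≤ mΩ
  F_zero : F 0 = ⊥
  X : ℕ → Ω → ℝ
  meas : ∀ i, 1 ≤ i → i ≤ n → StronglyMeasurable[F i] (X i)
  sq_int : ∀ i, 1 ≤ i → i ≤ n → Integrable (fun ω => (X i ω) ^ 2) P
  mean_zero : ∀ i, 1 ≤ i → i ≤ n → P[X i|F (i - 1)] =ᵐ[P] 0
  var_pos : ∀ i, 1 ≤ i → i ≤ n → 0 < ∫ ω, (X i ω) ^ 2 ∂P

namespace MDS

variable {Ω : Type} [mΩ : MeasurableSpace Ω] {P : Measure Ω}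

/-- `S_n = ∑_{i=1}^n X_i`. -/
noncomputable def S (A : MDS Ω P) : Ω → ℝ := fun ω => ∑ i ∈ Finset.Icc 1 A.n, A.X i ω

/-- `B_n² = ∑_{i=1}^n E[X_i²]`. -/
noncomputable def Bsq (A : MDS Ω P) : ℝ := ∑ i ∈ Finset.Icc 1 A.n, ∫ ω, (A.X i ω) ^ 2 ∂P

/-- `[S]_n = ∑_{i=1}^n X_i²`. -/
noncomputable def QV (A : MDS Ω P) : Ω → ℝ := fun ω => ∑ i ∈ Finset.Icc 1 A.n, (A.X i ω) ^ 2

/-- `⟨S⟩_n = ∑_{i=1}^n E[X_i² | F_{i-1}]`. -/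
noncomputable def CV (A : MDS Ω P) : Ω → ℝ :=
  fun ω => ∑ i ∈ Finset.Icc 1 A.n, (P[fun ω' => (A.X i ω') ^ 2|A.F (i - 1)]) ω

/-- `W_n = S_n / √[S]_n`. -/
noncomputable def W (A : MDS Ω P) : Ω → ℝ := fun ω => A.S ω / Real.sqrt (A.QV ω)

/-- Condition (A1): `|⟨S⟩_n − B_n²| ≤ δ² B_n²` a.s., with `δ ∈ [0, 1/4]`. -/
def CondA1 (A : MDS Ω P) (δ : ℝ) : Prop :=
  0 ≤ δ ∧ δ ≤ 1 / 4 ∧ ∀ᵐ ω ∂P, |A.CV ω - A.Bsq| ≤ δ ^ 2 * A.Bsq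

/-- Condition (A2): `∑_{i=1}^n E[|X_i|^{2+ρ} | F_{i-1}] ≤ ε^ρ B_n^{2+ρ}` a.s.,
with `ε ∈ (0, 1/4]`. -/
def CondA2 (A : MDS Ω P) (ρ ε : ℝ) : Prop :=
  0 < ε ∧ ε ≤ 1 / 4 ∧
    (∀ i, 1 ≤ i → i ≤ A.n → Integrable (fun ω => |A.X i ω| ^ (2 + ρ)) P) ∧
    ∀ᵐ ω ∂P,
      ∑ i ∈ Finset.Icc 1 A.n, (P[fun ω' => |A.X i ω'| ^ (2 + ρ)|A.F (i - 1)]) ω ≤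
        ε ^ ρ * A.Bsq ^ ((2 + ρ) / 2)

/-- Condition (A3): `E[X_i² | F_{i-1}] ≤ κ² B_n²` a.s. for each `i`, with `κ ∈ (0, 1/4]`. -/
def CondA3 (A : MDS Ω P) (κ : ℝ) : Prop :=
  0 < κ ∧ κ ≤ 1 / 4 ∧
    ∀ i, 1 ≤ i → i ≤ A.n →
      ∀ᵐ ω ∂P, (P[fun ω' => (A.X i ω') ^ 2|A.F (i - 1)]) ω ≤ κ ^ 2 * A.Bsq

/-- Condition (A4): `E[|X_i|^{2+ρ} | F_{i-1}] ≤ (γ B_n)^ρ E[X_i² | F_{i-1}]` a.s.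
for each `i`, with `γ ∈ (0, 1/4]`. -/
def CondA4 (A : MDS Ω P) (ρ γ : ℝ) : Prop :=
  0 < γ ∧ γ ≤ 1 / 4 ∧
    (∀ i, 1 ≤ i → i ≤ A.n → Integrable (fun ω => |A.X i ω| ^ (2 + ρ)) P) ∧
    ∀ i, 1 ≤ i → i ≤ A.n →
      ∀ᵐ ω ∂P,
        (P[fun ω' => |A.X i ω'| ^ (2 + ρ)|A.F (i - 1)]) ω ≤
          (γ * Real.sqrt A.Bsq) ^ ρ * (P[fun ω' => (A.X i ω') ^ 2|A.F (i - 1)]) ω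

end MDS




/-- Pointwise second-order expansion of `exp (l z + s z²)` near zero. -/
lemma expansion_small (l s η : ℝ) (hη : 0 < η) :
    ∃ c0 : ℝ, 0 < c0 ∧ c0 ≤ 1 ∧ ∀ z : ℝ, |z| ≤ c0 →
      |Real.exp (l * z + s * z ^ 2) - (1 + l * z + (l ^ 2 / 2 + s) * z ^ 2)| ≤ η * z ^ 2 := by
  set L : ℝ := |l| + |s| with hL
  have hL0 : 0 ≤ L := by positivity
  refine ⟨min 1 (min (1 / (L + 1)) (η / (L ^ 3 + L ^ 2 + 1))), by positivity, min_le_left _ _, ?_⟩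
  intro z hz
  have h1 : |z| ≤ 1 := hz.trans (min_le_left _ _)
  have h2 : |z| ≤ 1 / (L + 1) := hz.trans ((min_le_right _ _).trans (min_le_left _ _))
  have h3 : |z| ≤ η / (L ^ 3 + L ^ 2 + 1) := hz.trans ((min_le_right _ _).trans (min_le_right _ _))
  rw [le_div_iff₀ (by positivity)] at h2 h3
  have hz0 := abs_nonneg z
  set y := l * z + s * z ^ 2 with hy
  have hyz : |y| ≤ L * |z| := by
    calc |y| ≤ |l * z| + |s * z ^ 2| := abs_add_le _ _
      _ = |l| * |z| + |s| * |z| * |z| := by rw [abs_mul, abs_mul, abs_pow]; ring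
      _ ≤ |l| * |z| + |s| * |z| * 1 := by gcongr
      _ = L * |z| := by rw [hL]; ring
  have hy1 : |y| ≤ 1 := by nlinarith
  have hexp : |Real.exp y - (1 + y + y ^ 2 / 2)| ≤ |y| ^ 3 := by
    have := Real.exp_bound hy1 (n := 3) (by norm_num)
    simp [Finset.sum_range_succ, Nat.factorial] at this
    refine this.trans ?_
    have := pow_nonneg (abs_nonneg y) 3
    nlinarith
  have hq : |y ^ 2 / 2 - l ^ 2 / 2 * z ^ 2| ≤ L ^ 2 * |z| ^ 3 := by
    have e : y ^ 2 / 2 - l ^ 2 / 2 * z ^ 2 = (s * z ^ 2) * (y + l * z) / 2 := by rw [hy]; ring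
    have h5 : |y + l * z| ≤ 2 * L * |z| := by
      calc |y + l * z| ≤ |y| + |l * z| := abs_add_le _ _
        _ ≤ L * |z| + |l| * |z| := by rw [abs_mul]; gcongr
        _ ≤ L * |z| + L * |z| := by gcongr; rw [hL]; linarith [abs_nonneg s]
        _ = _ := by ring
    rw [e, abs_div, abs_mul, abs_mul, abs_pow, abs_two]
    have h6 : |s| ≤ L := by rw [hL]; linarith [abs_nonneg l]
    calc |s| * |z| ^ 2 * |y + l * z| / 2 ≤ L * |z| ^ 2 * (2 * L * |z|) / 2 := by gcongr
      _ = _ := by ring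
  have e : Real.exp y - (1 + l * z + (l ^ 2 / 2 + s) * z ^ 2)
      = (Real.exp y - (1 + y + y ^ 2 / 2)) + (y ^ 2 / 2 - l ^ 2 / 2 * z ^ 2) := by rw [hy]; ring
  rw [e]
  refine (abs_add_le _ _).trans ?_
  have h7 : |y| ^ 3 ≤ (L * |z|) ^ 3 := by gcongr
  have h8 : (L * |z|) ^ 3 + L ^ 2 * |z| ^ 3 ≤ η * z ^ 2 := by
    rw [← sq_abs z]
    have := sq_nonneg |z|
    nlinarith
  linarith

lemma pow_le_rpow_big {c z ρ : ℝ} (hc : 0 < c) (hz : c < |z|) (hρ : 0 < ρ) (k : ℕ) (hk : k ≤ 2) :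
    |z| ^ k ≤ c ^ ((k : ℝ) - (2 + ρ)) * |z| ^ (2 + ρ) := by
  have hz0 : 0 < |z| := hc.trans hz
  have hk' : (k : ℝ) ≤ 2 := by exact_mod_cast hk
  have : |z| ^ k = |z| ^ ((k : ℝ) - (2 + ρ)) * |z| ^ (2 + ρ) := by
    rw [← Real.rpow_add hz0]; simp
  rw [this]
  gcongr ?_ * _
  exact Real.rpow_le_rpow_of_nonpos hc hz.le (by linarith)

lemma expansion_full (ρ : ℝ) (hρ : 0 < ρ) (l s η : ℝ) (hη : 0 < η) :
    ∃ c0 : ℝ, 0 < c0 ∧ c0 ≤ 1 ∧ ∀ c, 0 < c → c ≤ c0 → ∀ G : ℝ, 0 ≤ G → ∃ K : ℝ, 0 ≤ K ∧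
      ∀ z g : ℝ, 0 ≤ g → (|z| ≤ c → g = Real.exp (l * z + s * z ^ 2)) → (c < |z| → g ≤ G) →
      |g - (1 + l * z + (l ^ 2 / 2 + s) * z ^ 2)| ≤ η * z ^ 2 + K * |z| ^ (2 + ρ) := by
  obtain ⟨c0, h0, h1, H⟩ := expansion_small l s η hη
  refine ⟨c0, h0, h1, fun c hc hcc G hG => ?_⟩
  refine ⟨(G + 1) * c ^ (((0:ℕ) : ℝ) - (2 + ρ)) + |l| * c ^ (((1:ℕ) : ℝ) - (2 + ρ)) +
    |l ^ 2 / 2 + s| * c ^ (((2:ℕ) : ℝ) - (2 + ρ)), by positivity, fun z g hg hsm hbig => ?_⟩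
  rcases le_or_gt |z| c with h | h
  · rw [hsm h]
    refine (H z (h.trans hcc)).trans ?_
    have : 0 ≤ |z| ^ (2 + ρ) := by positivity
    exact le_add_of_nonneg_right (by positivity)
  · have k0 := pow_le_rpow_big hc h hρ 0 (by norm_num)
    have k1 := pow_le_rpow_big hc h hρ 1 (by norm_num)
    have k2 := pow_le_rpow_big hc h hρ 2 (by norm_num)
    have hG' := hbig h
    have : |g - (1 + l * z + (l ^ 2 / 2 + s) * z ^ 2)| ≤
        (G + 1) * |z| ^ 0 + |l| * |z| ^ 1 + |l ^ 2 / 2 + s| * |z| ^ 2 := by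
      have e1 : |l * z| = |l| * |z| := abs_mul _ _
      have e2 : |(l ^ 2 / 2 + s) * z ^ 2| = |l ^ 2 / 2 + s| * |z| ^ 2 := by rw [abs_mul, abs_pow]
      have := neg_abs_le (l * z)
      have := le_abs_self (l * z)
      have := neg_abs_le ((l ^ 2 / 2 + s) * z ^ 2)
      have := le_abs_self ((l ^ 2 / 2 + s) * z ^ 2)
      rw [pow_zero, pow_one, ← e1, ← e2, abs_le]
      constructor <;> linarith
    refine this.trans ?_
    generalize c ^ (((0:ℕ) : ℝ) - (2 + ρ)) = c₀ at *
    generalize c ^ (((1:ℕ) : ℝ) - (2 + ρ)) = c₁ at *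
    generalize c ^ (((2:ℕ) : ℝ) - (2 + ρ)) = c₂ at *
    generalize |z| ^ (2 + ρ) = Z at *
    have hz2 : 0 ≤ η * z ^ 2 := by positivity
    have m0 := mul_le_mul_of_nonneg_left k0 (show 0 ≤ G + 1 by linarith)
    have m1 := mul_le_mul_of_nonneg_left k1 (abs_nonneg l)
    have m2 := mul_le_mul_of_nonneg_left k2 (abs_nonneg (l ^ 2 / 2 + s))
    linarith

/-- `z² ≤ τ + K |z|^{2+ρ}`. -/
lemma sq_le_rpow (ρ : ℝ) (hρ : 0 < ρ) (τ : ℝ) (hτ : 0 < τ) :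
    ∃ K : ℝ, 0 < K ∧ ∀ z : ℝ, z ^ 2 ≤ τ + K * |z| ^ (2 + ρ) := by
  refine ⟨(√τ) ^ (((2:ℕ) : ℝ) - (2 + ρ)), by positivity, fun z => ?_⟩
  have hs : 0 < √τ := Real.sqrt_pos.2 hτ
  rcases le_or_gt |z| (√τ) with h | h
  · have : z ^ 2 ≤ τ := by
      rw [← sq_abs, ← Real.sq_sqrt hτ.le]; gcongr
    have : 0 ≤ (√τ) ^ (((2:ℕ) : ℝ) - (2 + ρ)) * |z| ^ (2 + ρ) := by positivity
    linarith
  · have := pow_le_rpow_big hs h hρ 2 (by norm_num)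
    rw [sq_abs] at this
    linarith

lemma exp_lower {t : ℝ} (h : |t| ≤ 1 / 4) : Real.exp (t - t ^ 2) ≤ 1 + t := by
  have h1 := abs_le.1 h
  have hx : |t - t ^ 2| ≤ 1 := by rw [abs_le]; constructor <;> nlinarith
  have := Real.exp_bound hx (n := 3) (by norm_num)
  simp [Finset.sum_range_succ, Nat.factorial] at this
  have h2 : |t - t ^ 2| ^ 3 ≤ (5/4) ^ 3 * |t| ^ 3 := by
    rw [← mul_pow]; gcongr
    have : t - t ^ 2 = t * (1 - t) := by ring
    rw [this, abs_mul, mul_comm]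
    gcongr
    rw [abs_le]; constructor <;> linarith
  have h3 : |t| ^ 3 ≤ 1 / 4 * t ^ 2 := by
    rw [← sq_abs]; nlinarith [sq_nonneg |t|]
  have h4 := (abs_le.1 this).2
  have h5 : (t - t ^ 2) ^ 2 ≤ (25 / 16) * t ^ 2 := by
    have : (t - t ^ 2) ^ 2 = (1 - t) ^ 2 * t ^ 2 := by ring
    rw [this]
    gcongr
    nlinarith
  nlinarith [sq_nonneg t]

/-- Combine a second-order lower bound with a crude lower bound. -/
lemma combine_lower (ρ : ℝ) (hρ : 0 < ρ) (α η K b : ℝ) (hη : 0 < η) (hK : 0 ≤ K) (hb : 0 ≤ b) :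
    ∃ τ K0 K' : ℝ, 0 < τ ∧ 0 < K0 ∧ 0 ≤ K' ∧ (∀ z : ℝ, z ^ 2 ≤ τ + K0 * |z| ^ (2 + ρ)) ∧
      ∀ Φ V M : ℝ, 0 ≤ V → 0 ≤ M → V ≤ τ + K0 * M → 1 + α * V - K * M ≤ Φ → Real.exp (-b) ≤ Φ →
        Real.exp ((α - η) * V - K' * M) ≤ Φ := by
  obtain ⟨w, hw0, hw1, hw2⟩ : ∃ w : ℝ, 0 < w ∧ w ≤ 1 / 4 ∧ w * |α| ≤ η := by
    refine ⟨min (1/4) (η / (|α| + 1)), by positivity, min_le_left _ _, ?_⟩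
    have : min (1/4) (η / (|α| + 1)) ≤ η / (|α| + 1) := min_le_right _ _
    rw [le_div_iff₀ (by positivity)] at this
    have h0 : 0 < min (1/4) (η / (|α| + 1)) := by positivity
    linarith
  set τ : ℝ := w / (4 * (|α| + 1)) with hτ
  have hτ0 : 0 < τ := by positivity
  obtain ⟨K0, hK0, hK0'⟩ := sq_le_rpow ρ hρ τ hτ0
  set c1 : ℝ := min (τ / K0) (w / (2 * (K + 1))) with hc1
  have hc10 : 0 < c1 := by positivity
  refine ⟨τ, K0, 2 * K + (|α| * (τ / c1 + K0) + b / c1), hτ0, hK0, by positivity, hK0', ?_⟩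
  intro Φ V M hV hM hVM h1 h2
  have hα := le_abs_self α
  have hα' := neg_abs_le α
  have hα0 := abs_nonneg α
  rcases le_or_gt M c1 with h | h
  · refine le_trans ?_ h1
    have hM1 : M * K0 ≤ τ := by
      rw [← le_div_iff₀ hK0]; exact h.trans (min_le_left _ _)
    have hM2 : M * (2 * (K + 1)) ≤ w := by
      rw [← le_div_iff₀ (by positivity)]; exact h.trans (min_le_right _ _)
    have hV2 : V ≤ 2 * τ := by linarith
    have hτw : τ * (4 * (|α| + 1)) = w := by rw [hτ]; field_simp
    have hq0 : 0 ≤ |α| * V + K * M := by positivity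
    have hq : |α| * V + K * M ≤ w := by nlinarith
    have ht : |α * V - K * M| ≤ |α| * V + K * M := by
      rw [abs_le]
      have : 0 ≤ K * M := by positivity
      constructor <;> nlinarith
    have := exp_lower (t := α * V - K * M) (by linarith)
    have e : 1 + α * V - K * M = 1 + (α * V - K * M) := by ring
    rw [e]
    refine le_trans (Real.exp_le_exp.2 ?_) this
    have hsq : (α * V - K * M) ^ 2 ≤ w * (|α| * V + K * M) := by
      rw [← sq_abs]
      nlinarith [abs_nonneg (α * V - K * M)]
    have hex : 0 ≤ (|α| * (τ / c1 + K0) + b / c1) * M := by positivity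
    have hKM : 0 ≤ K * M := by positivity
    nlinarith
  · refine le_trans (Real.exp_le_exp.2 ?_) h2
    have hτM : τ ≤ τ / c1 * M := by
      rw [div_mul_eq_mul_div, le_div_iff₀ hc10]; nlinarith
    have hbM : b ≤ b / c1 * M := by
      rw [div_mul_eq_mul_div, le_div_iff₀ hc10]; nlinarith
    have hV2 : V ≤ (τ / c1 + K0) * M := by linarith
    have hA : (α - η) * V ≤ |α| * ((τ / c1 + K0) * M) := by
      calc (α - η) * V ≤ |α| * V := by gcongr; linarith
        _ ≤ _ := by gcongr
    have hKM : 0 ≤ K * M := by positivity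
    linarith


lemma prod_step {Ω : Type} [mΩ : MeasurableSpace Ω] {P : Measure Ω} [IsProbabilityMeasure P]
    {F : ℕ → MeasurableSpace Ω} (hmono : Monotone F) (hle : ∀ i, F i ≤ mΩ) (N : ℕ)
    (h : ℕ → Ω → ℝ) (C : ℝ) (hm : ∀ j < N, StronglyMeasurable[F (j + 1)] (h j))
    (h0 : ∀ j < N, ∀ ω, 0 ≤ h j ω) (hC : ∀ j < N, ∀ᵐ ω ∂P, h j ω ≤ C) :
    ∀ k ≤ N, StronglyMeasurable[F k] (fun ω => ∏ j ∈ Finset.range k, h j ω) ∧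
      Integrable (fun ω => ∏ j ∈ Finset.range k, h j ω) P := by
  intro k hk
  have hsm : StronglyMeasurable[F k] (fun ω => ∏ j ∈ Finset.range k, h j ω) := by
    refine Finset.stronglyMeasurable_fun_prod _ fun j hj => ?_
    have hj := Finset.mem_range.1 hj
    exact (hm j (by omega)).mono (hmono (by omega))
  refine ⟨hsm, ?_⟩
  refine Integrable.of_bound (hsm.mono (hle k)).aestronglyMeasurable (C ^ k) ?_
  have : ∀ᵐ ω ∂P, ∀ j ∈ Finset.range k, h j ω ≤ C := by
    exact (Finset.eventually_all _).2 fun j hj => hC j (by have := Finset.mem_range.1 hj; omega)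
  filter_upwards [this] with ω hω
  rw [Real.norm_of_nonneg (Finset.prod_nonneg fun j hj => h0 j (by have := Finset.mem_range.1 hj; omega) ω)]
  calc ∏ j ∈ Finset.range k, h j ω ≤ ∏ j ∈ Finset.range k, C :=
        Finset.prod_le_prod (fun j hj => h0 j (by have := Finset.mem_range.1 hj; omega) ω) hω
    _ = C ^ k := by simp

lemma prod_int_step {Ω : Type} [mΩ : MeasurableSpace Ω] {P : Measure Ω} [IsProbabilityMeasure P]
    {F : ℕ → MeasurableSpace Ω} (hmono : Monotone F) (hle : ∀ i, F i ≤ mΩ) (N : ℕ)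
    (h : ℕ → Ω → ℝ) (C : ℝ) (hm : ∀ j < N, StronglyMeasurable[F (j + 1)] (h j))
    (h0 : ∀ j < N, ∀ ω, 0 ≤ h j ω) (hC : ∀ j < N, ∀ᵐ ω ∂P, h j ω ≤ C) (k : ℕ) (hk : k < N) :
    Integrable (fun ω => (∏ j ∈ Finset.range k, h j ω) * (P[h k|F k]) ω) P ∧
    ∫ ω, ∏ j ∈ Finset.range (k + 1), h j ω ∂P =
      ∫ ω, (∏ j ∈ Finset.range k, h j ω) * (P[h k|F k]) ω ∂P := by
  obtain ⟨s1, i1⟩ := prod_step hmono hle N h C hm h0 hC k hk.le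
  obtain ⟨s2, i2⟩ := prod_step hmono hle N h C hm h0 hC (k + 1) hk
  have hki : Integrable (h k) P := by
    refine Integrable.of_bound ((hm k hk).mono (hle _)).aestronglyMeasurable C ?_
    filter_upwards [hC k hk] with ω hω
    rwa [Real.norm_of_nonneg (h0 k hk ω)]
  have hfg : Integrable ((fun ω => ∏ j ∈ Finset.range k, h j ω) * h k) P := by
    refine i2.congr (ae_of_all _ fun ω => ?_)
    simp [Finset.prod_range_succ]
  have key := condExp_mul_of_stronglyMeasurable_left s1 hfg hki
  refine ⟨integrable_condExp.congr key, ?_⟩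
  refine Eq.trans ?_ (integral_congr_ae key)
  rw [integral_condExp (hle k)]
  refine integral_congr_ae (ae_of_all _ fun ω => ?_)
  simp [Finset.prod_range_succ]

lemma prod_le_one {Ω : Type} [mΩ : MeasurableSpace Ω] {P : Measure Ω} [IsProbabilityMeasure P]
    {F : ℕ → MeasurableSpace Ω} (hmono : Monotone F) (hle : ∀ i, F i ≤ mΩ) (N : ℕ)
    (h : ℕ → Ω → ℝ) (C : ℝ) (hm : ∀ j < N, StronglyMeasurable[F (j + 1)] (h j))
    (h0 : ∀ j < N, ∀ ω, 0 ≤ h j ω) (hC : ∀ j < N, ∀ᵐ ω ∂P, h j ω ≤ C)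
    (hE : ∀ j < N, ∀ᵐ ω ∂P, (P[h j|F j]) ω ≤ 1) :
    ∀ k ≤ N, ∫ ω, ∏ j ∈ Finset.range k, h j ω ∂P ≤ 1 := by
  intro k
  induction k with
  | zero => simp
  | succ k ih =>
    intro hk
    obtain ⟨i, e⟩ := prod_int_step hmono hle N h C hm h0 hC k hk
    rw [e]
    refine le_trans (integral_mono_ae i (prod_step hmono hle N h C hm h0 hC k (by omega)).2 ?_) (ih (by omega))
    filter_upwards [hE k hk] with ω hω
    have : 0 ≤ ∏ j ∈ Finset.range k, h j ω :=
      Finset.prod_nonneg fun j hj => h0 j (by have := Finset.mem_range.1 hj; omega) ω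
    nlinarith

lemma one_le_prod {Ω : Type} [mΩ : MeasurableSpace Ω] {P : Measure Ω} [IsProbabilityMeasure P]
    {F : ℕ → MeasurableSpace Ω} (hmono : Monotone F) (hle : ∀ i, F i ≤ mΩ) (N : ℕ)
    (h : ℕ → Ω → ℝ) (C : ℝ) (hm : ∀ j < N, StronglyMeasurable[F (j + 1)] (h j))
    (h0 : ∀ j < N, ∀ ω, 0 ≤ h j ω) (hC : ∀ j < N, ∀ᵐ ω ∂P, h j ω ≤ C)
    (hE : ∀ j < N, ∀ᵐ ω ∂P, 1 ≤ (P[h j|F j]) ω) :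
    ∀ k ≤ N, 1 ≤ ∫ ω, ∏ j ∈ Finset.range k, h j ω ∂P := by
  intro k
  induction k with
  | zero => simp
  | succ k ih =>
    intro hk
    obtain ⟨i, e⟩ := prod_int_step hmono hle N h C hm h0 hC k hk
    rw [e]
    refine le_trans (ih (by omega)) (integral_mono_ae (prod_step hmono hle N h C hm h0 hC k (by omega)).2 i ?_)
    filter_upwards [hE k hk] with ω hω
    have : 0 ≤ ∏ j ∈ Finset.range k, h j ω :=
      Finset.prod_nonneg fun j hj => h0 j (by have := Finset.mem_range.1 hj; omega) ω
    nlinarith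

/-- Data shared by the two exponential-moment lemmas. -/
structure ExpData {Ω : Type} [mΩ : MeasurableSpace Ω] (P : Measure Ω)
    (F : ℕ → MeasurableSpace Ω) (N : ℕ) (g β : ℕ → Ω → ℝ) (G C : ℝ) : Prop where
  mono : Monotone F
  le : ∀ i, F i ≤ mΩ
  gm : ∀ j < N, StronglyMeasurable[F (j + 1)] (g j)
  g0 : ∀ j < N, ∀ ω, 0 ≤ g j ω
  gG : ∀ j < N, ∀ ω, g j ω ≤ G
  bm : ∀ j < N, StronglyMeasurable[F j] (β j)
  bC : ∀ j < N, ∀ᵐ ω ∂P, |β j ω| ≤ C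

namespace ExpData
variable {Ω : Type} [mΩ : MeasurableSpace Ω] {P : Measure Ω} [IsProbabilityMeasure P]
    {F : ℕ → MeasurableSpace Ω} {N : ℕ} {g β : ℕ → Ω → ℝ} {G C : ℝ}

lemma facts (D : ExpData P F N g β G C) :
    (∀ j < N, StronglyMeasurable[F (j + 1)] (fun ω => Real.exp (-β j ω) * g j ω)) ∧
    (∀ j < N, ∀ ω, 0 ≤ Real.exp (-β j ω) * g j ω) ∧
    (∀ j < N, ∀ᵐ ω ∂P, Real.exp (-β j ω) * g j ω ≤ Real.exp C * G) ∧
    (∀ j < N, ∀ᵐ ω ∂P, (P[fun ω => Real.exp (-β j ω) * g j ω|F j]) ω =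
      Real.exp (-β j ω) * (P[g j|F j]) ω) ∧
    (∀ j < N, Integrable (g j) P) := by
  have em : ∀ j < N, StronglyMeasurable[F j] (fun ω => Real.exp (-β j ω)) := fun j hj =>
    Real.continuous_exp.comp_stronglyMeasurable (D.bm j hj).neg
  have m1 : ∀ j < N, StronglyMeasurable[F (j + 1)] (fun ω => Real.exp (-β j ω) * g j ω) :=
    fun j hj => ((em j hj).mono (D.mono (by omega))).mul (D.gm j hj)
  have n1 : ∀ j < N, ∀ ω, 0 ≤ Real.exp (-β j ω) * g j ω :=
    fun j hj ω => mul_nonneg (Real.exp_pos _).le (D.g0 j hj ω)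
  have b1 : ∀ j < N, ∀ᵐ ω ∂P, Real.exp (-β j ω) * g j ω ≤ Real.exp C * G := by
    intro j hj
    filter_upwards [D.bC j hj] with ω hω
    have := D.g0 j hj ω
    have h2 := D.gG j hj ω
    have : -β j ω ≤ C := by linarith [(abs_le.1 hω).1]
    gcongr
  have gi : ∀ j < N, Integrable (g j) P := by
    intro j hj
    refine Integrable.of_bound ((D.gm j hj).mono (D.le _)).aestronglyMeasurable G (ae_of_all _ fun ω => ?_)
    rw [Real.norm_of_nonneg (D.g0 j hj ω)]; exact D.gG j hj ω
  refine ⟨m1, n1, b1, fun j hj => ?_, gi⟩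
  have hi : Integrable ((fun ω => Real.exp (-β j ω)) * g j) P := by
    refine Integrable.of_bound ((m1 j hj).mono (D.le _)).aestronglyMeasurable (Real.exp C * G) ?_
    filter_upwards [b1 j hj] with ω hω
    exact (Real.norm_of_nonneg (n1 j hj ω)).le.trans hω
  exact condExp_mul_of_stronglyMeasurable_left (em j hj) hi (gi j hj)

lemma integrable_prod (D : ExpData P F N g β G C) :
    Integrable (fun ω => ∏ j ∈ Finset.range N, g j ω) P :=
  (prod_step D.mono D.le N g G D.gm D.g0 (fun j hj => ae_of_all _ (D.gG j hj)) N le_rfl).2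

lemma upper (D : ExpData P F N g β G C) (b : ℝ)
    (hE : ∀ j < N, ∀ᵐ ω ∂P, (P[g j|F j]) ω ≤ Real.exp (β j ω))
    (hb : ∀ᵐ ω ∂P, ∑ j ∈ Finset.range N, β j ω ≤ b) :
    ∫ ω, ∏ j ∈ Finset.range N, g j ω ∂P ≤ Real.exp b := by
  obtain ⟨m1, n1, b1, c1, gi⟩ := D.facts
  have h1 := prod_le_one D.mono D.le N _ _ m1 n1 b1 (fun j hj => by
    filter_upwards [c1 j hj, hE j hj] with ω h1 h2
    rw [h1]
    calc _ ≤ Real.exp (-β j ω) * Real.exp (β j ω) := by gcongr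
      _ = 1 := by rw [← Real.exp_add]; simp) N le_rfl
  have i1 := (prod_step D.mono D.le N _ _ m1 n1 b1 N le_rfl).2
  calc ∫ ω, ∏ j ∈ Finset.range N, g j ω ∂P
      ≤ ∫ ω, Real.exp b * ∏ j ∈ Finset.range N, (Real.exp (-β j ω) * g j ω) ∂P := by
        refine integral_mono_ae D.integrable_prod (i1.const_mul _) ?_
        filter_upwards [hb] with ω hω
        rw [Finset.prod_mul_distrib, ← mul_assoc, ← Real.exp_sum, ← Real.exp_add]
        have : 0 ≤ ∏ j ∈ Finset.range N, g j ω :=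
          Finset.prod_nonneg fun j hj => D.g0 j (Finset.mem_range.1 hj) ω
        refine le_mul_of_one_le_left this (Real.one_le_exp ?_)
        rw [Finset.sum_neg_distrib]; linarith
    _ = Real.exp b * ∫ ω, ∏ j ∈ Finset.range N, (Real.exp (-β j ω) * g j ω) ∂P :=
        integral_const_mul _ _
    _ ≤ Real.exp b * 1 := by gcongr
    _ = _ := mul_one _

lemma lower (D : ExpData P F N g β G C) (b : ℝ)
    (hE : ∀ j < N, ∀ᵐ ω ∂P, Real.exp (β j ω) ≤ (P[g j|F j]) ω)
    (hb : ∀ᵐ ω ∂P, b ≤ ∑ j ∈ Finset.range N, β j ω) :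
    Real.exp b ≤ ∫ ω, ∏ j ∈ Finset.range N, g j ω ∂P := by
  obtain ⟨m1, n1, b1, c1, gi⟩ := D.facts
  have h1 := one_le_prod D.mono D.le N _ _ m1 n1 b1 (fun j hj => by
    filter_upwards [c1 j hj, hE j hj] with ω h1 h2
    rw [h1]
    calc (1:ℝ) = Real.exp (-β j ω) * Real.exp (β j ω) := by rw [← Real.exp_add]; simp
      _ ≤ _ := by gcongr) N le_rfl
  have i1 := (prod_step D.mono D.le N _ _ m1 n1 b1 N le_rfl).2
  calc Real.exp b = Real.exp b * 1 := (mul_one _).symm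
    _ ≤ Real.exp b * ∫ ω, ∏ j ∈ Finset.range N, (Real.exp (-β j ω) * g j ω) ∂P := by gcongr
    _ = ∫ ω, Real.exp b * ∏ j ∈ Finset.range N, (Real.exp (-β j ω) * g j ω) ∂P :=
        (integral_const_mul _ _).symm
    _ ≤ ∫ ω, ∏ j ∈ Finset.range N, g j ω ∂P := by
        refine integral_mono_ae (i1.const_mul _) D.integrable_prod ?_
        filter_upwards [hb] with ω hω
        rw [Finset.prod_mul_distrib, ← mul_assoc, ← Real.exp_sum, ← Real.exp_add]
        have : 0 ≤ ∏ j ∈ Finset.range N, g j ω :=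
          Finset.prod_nonneg fun j hj => D.g0 j (Finset.mem_range.1 hj) ω
        refine mul_le_of_le_one_left this (Real.exp_le_one_iff.2 ?_)
        rw [Finset.sum_neg_distrib]; linarith

end ExpData


/-- Normalised martingale differences: `z j = a X_{j+1} / B_n`. -/
structure Setup {Ω : Type} [mΩ : MeasurableSpace Ω] (P : Measure Ω)
    (F : ℕ → MeasurableSpace Ω) (N : ℕ) (z : ℕ → Ω → ℝ) (ρ a d : ℝ) : Prop where
  mono : Monotone F
  le : ∀ i, F i ≤ mΩ
  zm : ∀ j < N, StronglyMeasurable[F (j + 1)] (z j)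
  int2 : ∀ j < N, Integrable (fun ω => z j ω ^ 2) P
  intρ : ∀ j < N, Integrable (fun ω => |z j ω| ^ (2 + ρ)) P
  mean : ∀ j < N, P[z j|F j] =ᵐ[P] 0
  apos : 0 < a
  V : ∀ᵐ ω ∂P, |∑ j ∈ Finset.range N, (P[fun ω => z j ω ^ 2|F j]) ω - a ^ 2| ≤ d * a ^ 2
  M : ∀ᵐ ω ∂P, ∑ j ∈ Finset.range N, (P[fun ω => |z j ω| ^ (2 + ρ)|F j]) ω ≤ d * a ^ 2

set_option linter.unusedSectionVars false
set_option linter.unusedVariables false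
namespace Setup
variable {Ω : Type} [mΩ : MeasurableSpace Ω] {P : Measure Ω} [IsProbabilityMeasure P]
    {F : ℕ → MeasurableSpace Ω} {N : ℕ} {z : ℕ → Ω → ℝ} {ρ a d : ℝ}

lemma int1 (S : Setup P F N z ρ a d) (j : ℕ) (hj : j < N) : Integrable (z j) P := by
  have : MemLp (z j) 2 P :=
    (memLp_two_iff_integrable_sq ((S.zm j hj).mono (S.le _)).aestronglyMeasurable).2 (S.int2 j hj)
  exact this.integrable (by norm_num)

lemma neg (S : Setup P F N z ρ a d) : Setup P F N (fun j ω => - z j ω) ρ a d where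
  mono := S.mono
  le := S.le
  zm := fun j hj => (S.zm j hj).neg
  int2 := by simpa using S.int2
  intρ := by simpa using S.intρ
  mean := fun j hj => by
    have h := condExp_neg (μ := P) (z j) (F j)
    have h2 := S.mean j hj
    filter_upwards [h, h2] with ω h h2
    have e : (fun ω => - z j ω) = - z j := rfl
    rw [e, h]; simp [h2]
  apos := S.apos
  V := by simpa using S.V
  M := by simpa using S.M

lemma V_nonneg : ∀ᵐ ω ∂P, ∀ j, 0 ≤ (P[fun ω => z j ω ^ 2|F j]) ω := by
  rw [ae_all_iff]
  intro j
  exact condExp_nonneg (ae_of_all _ fun ω => sq_nonneg _)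

lemma M_nonneg : ∀ᵐ ω ∂P, ∀ j, 0 ≤ (P[fun ω => |z j ω| ^ (2 + ρ)|F j]) ω := by
  rw [ae_all_iff]
  intro j
  exact condExp_nonneg (ae_of_all _ fun ω => by positivity)

lemma d_nonneg (S : Setup P F N z ρ a d) : 0 ≤ d := by
  obtain ⟨ω, hω⟩ := S.V.exists
  have := (abs_nonneg _).trans hω
  have ha := S.apos
  by_contra h
  push Not at h
  have : 0 < a ^ 2 := by positivity
  nlinarith

lemma V_le (S : Setup P F N z ρ a d) :
    ∀ᵐ ω ∂P, ∀ j < N, (P[fun ω => z j ω ^ 2|F j]) ω ≤ (1 + d) * a ^ 2 := by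
  filter_upwards [S.V, V_nonneg (P := P) (F := F) (z := z)] with ω h1 h2 j hj
  have := Finset.single_le_sum (f := fun j => (P[fun ω => z j ω ^ 2|F j]) ω)
    (fun i _ => h2 i) (Finset.mem_range.2 hj)
  have := (abs_le.1 h1).2
  linarith

lemma M_le (S : Setup P F N z ρ a d) :
    ∀ᵐ ω ∂P, ∀ j < N, (P[fun ω => |z j ω| ^ (2 + ρ)|F j]) ω ≤ d * a ^ 2 := by
  filter_upwards [S.M, M_nonneg (P := P) (F := F) (z := z) (ρ := ρ)] with ω h1 h2 j hj
  have := Finset.single_le_sum (f := fun j => (P[fun ω => |z j ω| ^ (2 + ρ)|F j]) ω)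
    (fun i _ => h2 i) (Finset.mem_range.2 hj)
  linarith

lemma lin_int (S : Setup P F N z ρ a d) (k l A K : ℝ) (j : ℕ) (hj : j < N) :
    Integrable (fun ω => k + l * z j ω + A * z j ω ^ 2 + K * |z j ω| ^ (2 + ρ)) P :=
  (((integrable_const k).add ((S.int1 j hj).const_mul l)).add ((S.int2 j hj).const_mul A)).add
    ((S.intρ j hj).const_mul K)

lemma lin_cond (S : Setup P F N z ρ a d) (k l A K : ℝ) (j : ℕ) (hj : j < N) :
    ∀ᵐ ω ∂P, (P[fun ω => k + l * z j ω + A * z j ω ^ 2 + K * |z j ω| ^ (2 + ρ)|F j]) ω =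
      k + A * (P[fun ω => z j ω ^ 2|F j]) ω + K * (P[fun ω => |z j ω| ^ (2 + ρ)|F j]) ω := by
  have i0 : Integrable (fun _ : Ω => k) P := integrable_const k
  have i1 := S.int1 j hj
  have i2 := S.int2 j hj
  have i3 := S.intρ j hj
  have e : (fun ω => k + l * z j ω + A * z j ω ^ 2 + K * |z j ω| ^ (2 + ρ)) =
    (((fun _ => k) + l • z j) + A • (fun ω => z j ω ^ 2)) + K • (fun ω => |z j ω| ^ (2 + ρ)) := rfl
  rw [e]
  have c1 := condExp_add ((i0.add (i1.smul l)).add (i2.smul A)) (i3.smul K) (F j)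
  have c2 := condExp_add (i0.add (i1.smul l)) (i2.smul A) (F j)
  have c3 := condExp_add i0 (i1.smul l) (F j)
  have c4 := condExp_smul (μ := P) l (z j) (F j)
  have c5 := condExp_smul (μ := P) A (fun ω => z j ω ^ 2) (F j)
  have c6 := condExp_smul (μ := P) K (fun ω => |z j ω| ^ (2 + ρ)) (F j)
  have c7 := condExp_const (μ := P) (S.le j) k
  filter_upwards [c1, c2, c3, c4, c5, c6, S.mean j hj] with ω h1 h2 h3 h4 h5 h6 h7
  simp only [Pi.add_apply, Pi.smul_apply, smul_eq_mul] at *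
  rw [h1, h2, h3, h4, h5, h6, c7, h7]
  simp

lemma cond_le (S : Setup P F N z ρ a d) (k l A K : ℝ) (j : ℕ) (hj : j < N) (g : Ω → ℝ)
    (hg : Integrable g P)
    (h : ∀ ω, g ω ≤ k + l * z j ω + A * z j ω ^ 2 + K * |z j ω| ^ (2 + ρ)) :
    ∀ᵐ ω ∂P, (P[g|F j]) ω ≤
      k + A * (P[fun ω => z j ω ^ 2|F j]) ω + K * (P[fun ω => |z j ω| ^ (2 + ρ)|F j]) ω := by
  have := condExp_mono (m := F j) hg (S.lin_int k l A K j hj) (ae_of_all _ h)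
  filter_upwards [this, S.lin_cond k l A K j hj] with ω h1 h2
  rw [← h2]; exact h1

lemma le_cond (S : Setup P F N z ρ a d) (k l A K : ℝ) (j : ℕ) (hj : j < N) (g : Ω → ℝ)
    (hg : Integrable g P)
    (h : ∀ ω, k + l * z j ω + A * z j ω ^ 2 + K * |z j ω| ^ (2 + ρ) ≤ g ω) :
    ∀ᵐ ω ∂P, 
      k + A * (P[fun ω => z j ω ^ 2|F j]) ω + K * (P[fun ω => |z j ω| ^ (2 + ρ)|F j]) ω
        ≤ (P[g|F j]) ω := by
  have := condExp_mono (m := F j) (S.lin_int k l A K j hj) hg (ae_of_all _ h)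
  filter_upwards [this, S.lin_cond k l A K j hj] with ω h1 h2
  rw [← h2]; exact h1

/-- exponents are bounded and measurable -/
lemma expData (S : Setup P F N z ρ a d) (g : ℕ → Ω → ℝ) (G A K : ℝ)
    (gm : ∀ j < N, StronglyMeasurable[F (j + 1)] (g j))
    (g0 : ∀ j < N, ∀ ω, 0 ≤ g j ω) (gG : ∀ j < N, ∀ ω, g j ω ≤ G) :
    ExpData P F N g (fun j ω => A * (P[fun ω => z j ω ^ 2|F j]) ω +
      K * (P[fun ω => |z j ω| ^ (2 + ρ)|F j]) ω) G (|A| * ((1 + d) * a ^ 2) + |K| * (d * a ^ 2)) where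
  mono := S.mono
  le := S.le
  gm := gm
  g0 := g0
  gG := gG
  bm := fun j hj => (stronglyMeasurable_condExp.const_mul A).add (stronglyMeasurable_condExp.const_mul K)
  bC := fun j hj => by
    filter_upwards [S.V_le, S.M_le, V_nonneg (P := P) (F := F) (z := z),
      M_nonneg (P := P) (F := F) (z := z) (ρ := ρ)] with ω h1 h2 h3 h4
    refine (abs_add_le _ _).trans ?_
    rw [abs_mul, abs_mul, abs_of_nonneg (h3 j), abs_of_nonneg (h4 j)]
    have := h1 j hj
    have := h2 j hj
    gcongr

lemma sum_bound (S : Setup P F N z ρ a d) (A K η : ℝ) (hd : (|A| + |K|) * d ≤ η) :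
    ∀ᵐ ω ∂P, |∑ j ∈ Finset.range N, (A * (P[fun ω => z j ω ^ 2|F j]) ω +
      K * (P[fun ω => |z j ω| ^ (2 + ρ)|F j]) ω) - A * a ^ 2| ≤ η * a ^ 2 := by
  filter_upwards [S.V, S.M, M_nonneg (P := P) (F := F) (z := z) (ρ := ρ)] with ω h1 h2 h3
  rw [Finset.sum_add_distrib, ← Finset.mul_sum, ← Finset.mul_sum]
  have h4 : 0 ≤ ∑ j ∈ Finset.range N, (P[fun ω => |z j ω| ^ (2 + ρ)|F j]) ω :=
    Finset.sum_nonneg fun j _ => h3 j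
  generalize ∑ j ∈ Finset.range N, (P[fun ω => |z j ω| ^ (2 + ρ)|F j]) ω = m at *
  generalize ∑ j ∈ Finset.range N, (P[fun ω => z j ω ^ 2|F j]) ω = v at *
  have e : A * v + K * m - A * a ^ 2 = A * (v - a ^ 2) + K * m := by ring
  rw [e]
  refine (abs_add_le _ _).trans ?_
  rw [abs_mul, abs_mul, abs_of_nonneg h4]
  calc |A| * |v - a ^ 2| + |K| * m ≤ |A| * (d * a ^ 2) + |K| * (d * a ^ 2) := by gcongr
    _ = (|A| + |K|) * d * a ^ 2 := by ring
    _ ≤ _ := by gcongr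

end Setup

/-- Upper bound for exponential moments. -/
lemma gen_upper (ρ : ℝ) (hρ : 0 < ρ) (l s η : ℝ) (hη : 0 < η) :
    ∃ c0 : ℝ, 0 < c0 ∧ c0 ≤ 1 ∧ ∀ c, 0 < c → c ≤ c0 → ∀ G : ℝ, 0 ≤ G → ∃ d0 : ℝ, 0 < d0 ∧
      ∀ (Ω : Type) [mΩ : MeasurableSpace Ω] (P : Measure Ω) [IsProbabilityMeasure P]
        (F : ℕ → MeasurableSpace Ω) (N : ℕ) (z : ℕ → Ω → ℝ) (a d : ℝ),
        Setup P F N z ρ a d → d ≤ d0 → ∀ g : ℕ → Ω → ℝ,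
        (∀ j < N, StronglyMeasurable[F (j + 1)] (g j)) → (∀ j < N, ∀ ω, 0 ≤ g j ω) →
        (∀ j < N, ∀ ω, |z j ω| ≤ c → g j ω = Real.exp (l * z j ω + s * z j ω ^ 2)) →
        (∀ j < N, ∀ ω, c < |z j ω| → g j ω ≤ G) →
        Integrable (fun ω => ∏ j ∈ Finset.range N, g j ω) P ∧
        ∫ ω, ∏ j ∈ Finset.range N, g j ω ∂P ≤ Real.exp (a ^ 2 * (l ^ 2 / 2 + s + η)) := by
  obtain ⟨c0, h0, h1, H⟩ := expansion_full ρ hρ l s (η / 2) (by positivity)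
  refine ⟨c0, h0, h1, fun c hc hcc G hG => ?_⟩
  obtain ⟨K, hK, H⟩ := H c hc hcc G hG
  set A : ℝ := l ^ 2 / 2 + s + η / 2 with hA
  refine ⟨(η / 2) / (|A| + |K| + 1), by positivity, ?_⟩
  intro Ω mΩ P _ F N z a d S hd g gm g0 gs gb
  rw [le_div_iff₀ (by positivity)] at hd
  have hd0 := S.d_nonneg
  have gG : ∀ j < N, ∀ ω, g j ω ≤ max G (Real.exp (|l| + |s|)) := by
    intro j hj ω
    rcases le_or_gt |z j ω| c with h | h
    · rw [gs j hj ω h]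
      refine le_trans (Real.exp_le_exp.2 ?_) (le_max_right _ _)
      have hz1 : |z j ω| ≤ 1 := h.trans (hcc.trans h1)
      have e1 : l * z j ω ≤ |l| * 1 := by
        refine (le_abs_self _).trans ?_
        rw [abs_mul]; gcongr
      have e2 : s * z j ω ^ 2 ≤ |s| * 1 ^ 2 := by
        refine (le_abs_self _).trans ?_
        rw [abs_mul, abs_pow]; gcongr
      linarith
    · exact (gb j hj ω h).trans (le_max_left _ _)
  have D := S.expData g _ A K gm g0 gG
  refine ⟨D.integrable_prod, D.upper _ ?_ ?_⟩
  · intro j hj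
    have := S.cond_le 1 l A K j hj (g j) (D.facts.2.2.2.2 j hj) (fun ω => by
      have := (abs_le.1 (H (z j ω) (g j ω) (g0 j hj ω) (gs j hj ω) (gb j hj ω))).2
      rw [hA]; linarith)
    filter_upwards [this] with ω hω
    refine hω.trans ?_
    have := Real.add_one_le_exp (A * (P[fun ω => z j ω ^ 2|F j]) ω +
      K * (P[fun ω => |z j ω| ^ (2 + ρ)|F j]) ω)
    linarith
  · filter_upwards [S.sum_bound A K (η / 2) (by linarith)] with ω hω
    have := (abs_le.1 hω).2
    rw [hA] at *
    linarith

set_option linter.unusedSectionVars false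
set_option linter.unusedVariables false

/-- truncation at level `c` -/
noncomputable def tr (c x : ℝ) : ℝ := if |x| ≤ c then x else 0
/-- indicator of being above level `c` -/
noncomputable def ib (c x : ℝ) : ℝ := if |x| ≤ c then 0 else 1

lemma measurable_tr (c : ℝ) : Measurable (tr c) :=
  Measurable.ite (measurableSet_le measurable_norm measurable_const) measurable_id measurable_const

lemma measurable_ib (c : ℝ) : Measurable (ib c) :=
  Measurable.ite (measurableSet_le measurable_norm measurable_const) measurable_const measurable_const

lemma sum_trichotomy (N : ℕ) (z : ℕ → ℝ) (c a q x : ℝ) (ha : 0 < a) (hq : 0 < q) (hq1 : q < 1)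
    (hqx : q < x)
    (h : x ≤ (∑ j ∈ Finset.range N, z j) / (a * √(∑ j ∈ Finset.range N, z j ^ 2))) :
    q ^ 2 * a ^ 2 ≤ ∑ j ∈ Finset.range N, ib c (z j) ∨
    ∑ j ∈ Finset.range N, tr c (z j) ^ 2 ≤ (1 - q) * a ^ 2 ∨
    (x - q) * √(1 - q) * a ^ 2 ≤ ∑ j ∈ Finset.range N, tr c (z j) := by
  by_contra! hcon
  obtain ⟨h1, h2, h3⟩ := hcon
  set Q := ∑ j ∈ Finset.range N, z j ^ 2 with hQ
  have hVQ : ∑ j ∈ Finset.range N, tr c (z j) ^ 2 ≤ Q := by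
    refine Finset.sum_le_sum fun j _ => ?_
    unfold tr; split_ifs
    · exact le_rfl
    · simpa using sq_nonneg (z j)
  have hQ0 : 0 < Q := by
    refine lt_of_lt_of_le (lt_of_le_of_lt ?_ h2) hVQ
    have : 0 ≤ 1 - q := by linarith
    positivity
  have hs : 0 < √Q := Real.sqrt_pos.2 hQ0
  rw [le_div_iff₀ (by positivity)] at h
  have hdec : ∑ j ∈ Finset.range N, z j = ∑ j ∈ Finset.range N, tr c (z j) +
      ∑ j ∈ Finset.range N, ib c (z j) * z j := by
    rw [← Finset.sum_add_distrib]
    refine Finset.sum_congr rfl fun j _ => ?_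
    unfold tr ib; split_ifs <;> simp
  have hcs := Finset.sum_mul_sq_le_sq_mul_sq (Finset.range N) (fun j => ib c (z j)) z
  have hib : ∑ j ∈ Finset.range N, ib c (z j) ^ 2 = ∑ j ∈ Finset.range N, ib c (z j) := by
    refine Finset.sum_congr rfl fun j _ => ?_
    unfold ib; split_ifs <;> simp
  rw [hib] at hcs
  have hbig : ∑ j ∈ Finset.range N, ib c (z j) * z j ≤ q * a * √Q := by
    refine le_trans (le_abs_self _) (abs_le_of_sq_le_sq (hcs.trans ?_) (by positivity))
    rw [mul_pow, mul_pow, Real.sq_sqrt hQ0.le]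
    gcongr
  have hlow : √(1 - q) * a ≤ √Q := by
    refine Real.le_sqrt_of_sq_le ?_
    rw [mul_pow, Real.sq_sqrt (by linarith)]
    linarith
  have : (x - q) * √(1 - q) * a ^ 2 ≤ (x - q) * a * √Q := by
    have h9 : 0 ≤ (x - q) * a := mul_nonneg (by linarith) ha.le
    nlinarith
  nlinarith

lemma chernoff {Ω : Type} [mΩ : MeasurableSpace Ω] {P : Measure Ω} [IsProbabilityMeasure P]
    (f : Ω → ℝ) (hf : Integrable f P) (h0 : ∀ ω, 0 ≤ f ω) (t b : ℝ) (E : Set Ω)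
    (hE : ∀ ω ∈ E, Real.exp t ≤ f ω) (hb : ∫ ω, f ω ∂P ≤ Real.exp b) :
    P.real E ≤ Real.exp (b - t) := by
  have h1 := mul_meas_ge_le_integral_of_nonneg (ae_of_all _ h0) hf (Real.exp t)
  have h2 : P.real E ≤ P.real {x | Real.exp t ≤ f x} := measureReal_mono hE
  rw [Real.exp_sub, le_div_iff₀ (Real.exp_pos _)]
  have := Real.exp_pos t
  nlinarith

/-- weights used in the upper bound -/
noncomputable def wt (l s u c x : ℝ) : ℝ := Real.exp (l * tr c x + s * tr c x ^ 2 + u * ib c x)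

lemma measurable_wt (l s u c : ℝ) : Measurable (wt l s u c) := by
  have := measurable_tr c
  have := measurable_ib c
  unfold wt
  fun_prop

lemma prod_wt (N : ℕ) (z : ℕ → ℝ) (l s u c : ℝ) :
    ∏ j ∈ Finset.range N, wt l s u c (z j) = Real.exp (l * ∑ j ∈ Finset.range N, tr c (z j) +
      s * ∑ j ∈ Finset.range N, tr c (z j) ^ 2 + u * ∑ j ∈ Finset.range N, ib c (z j)) := by
  simp only [wt]
  rw [← Real.exp_sum, Finset.sum_add_distrib, Finset.sum_add_distrib, Finset.mul_sum,
    Finset.mul_sum, Finset.mul_sum]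

/-- Chernoff bound for truncated sums. -/
lemma gen_chernoff (ρ : ℝ) (hρ : 0 < ρ) (l s u η : ℝ) (hη : 0 < η) :
    ∃ c0 : ℝ, 0 < c0 ∧ c0 ≤ 1 ∧ ∀ c, 0 < c → c ≤ c0 → ∃ d0 : ℝ, 0 < d0 ∧
      ∀ (Ω : Type) [mΩ : MeasurableSpace Ω] (P : Measure Ω) [IsProbabilityMeasure P]
        (F : ℕ → MeasurableSpace Ω) (N : ℕ) (z : ℕ → Ω → ℝ) (a d : ℝ),
        Setup P F N z ρ a d → d ≤ d0 → ∀ t : ℝ, 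
        P.real {ω | t ≤ l * ∑ j ∈ Finset.range N, tr c (z j ω) +
          s * ∑ j ∈ Finset.range N, tr c (z j ω) ^ 2 + u * ∑ j ∈ Finset.range N, ib c (z j ω)} ≤
          Real.exp (a ^ 2 * (l ^ 2 / 2 + s + η) - t) := by
  obtain ⟨c0, h0, h1, H⟩ := gen_upper ρ hρ l s η hη
  refine ⟨c0, h0, h1, fun c hc hcc => ?_⟩
  obtain ⟨d0, hd0, H⟩ := H c hc hcc (Real.exp u) (Real.exp_pos _).le
  refine ⟨d0, hd0, ?_⟩
  intro Ω mΩ P _ F N z a d S hd t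
  obtain ⟨hi, hb⟩ := H Ω P F N z a d S hd (fun j ω => wt l s u c (z j ω))
    (fun j hj => ((measurable_wt l s u c).comp (S.zm j hj).measurable).stronglyMeasurable)
    (fun j hj ω => (Real.exp_pos _).le)
    (fun j hj ω h => by simp [wt, tr, ib, h])
    (fun j hj ω h => by simp [wt, tr, ib, not_le.2 h])
  refine chernoff _ hi (fun ω => Finset.prod_nonneg fun j _ => (Real.exp_pos _).le) t _ _ ?_ hb
  intro ω hω
  rw [prod_wt]
  exact Real.exp_le_exp.2 hω

lemma choose_q (x η : ℝ) (hx : 0 < x) (hη : 0 < η) :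
    ∃ q : ℝ, 0 < q ∧ q < 1 ∧ q < x ∧ x ^ 2 / 2 - η ≤ ((x - q) * √(1 - q)) ^ 2 / 2 := by
  have hc : ContinuousAt (fun q : ℝ => ((x - q) * √(1 - q)) ^ 2 / 2) 0 := by fun_prop
  have h1 : ∀ᶠ q in 𝓝 (0:ℝ), x ^ 2 / 2 - η < ((x - q) * √(1 - q)) ^ 2 / 2 := by
    refine hc.eventually (lt_mem_nhds ?_)
    simp; linarith
  have h2 : ∀ᶠ q in 𝓝 (0:ℝ), q < 1 := gt_mem_nhds (by norm_num)
  have h3 : ∀ᶠ q in 𝓝 (0:ℝ), q < x := gt_mem_nhds hx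
  have h4 : ∀ᶠ q in 𝓝[>] (0:ℝ), 0 < q := self_mem_nhdsWithin
  have := (((h1.and h2).and h3).filter_mono nhdsWithin_le_nhds).and h4
  obtain ⟨q, ⟨⟨h1, h2⟩, h3⟩, h4⟩ := this.exists
  exact ⟨q, h4, h2, h3, h1.le⟩

lemma core_upper (ρ : ℝ) (hρ : 0 < ρ) (x η : ℝ) (hx : 0 < x) (hη : 0 < η) :
    ∃ d0 : ℝ, 0 < d0 ∧
      ∀ (Ω : Type) [mΩ : MeasurableSpace Ω] (P : Measure Ω) [IsProbabilityMeasure P]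
        (F : ℕ → MeasurableSpace Ω) (N : ℕ) (z : ℕ → Ω → ℝ) (a d : ℝ),
        Setup P F N z ρ a d → d ≤ d0 →
        P.real {ω | x ≤ (∑ j ∈ Finset.range N, z j ω) / (a * √(∑ j ∈ Finset.range N, z j ω ^ 2))} ≤
          3 * Real.exp (-(a ^ 2 * (x ^ 2 / 2 - η))) := by
  obtain ⟨q, hq, hq1, hqx, hqη⟩ := choose_q x (η / 2) hx (by positivity)
  set x' := (x - q) * √(1 - q) with hx'
  have hx'0 : 0 ≤ x' := mul_nonneg (by linarith) (Real.sqrt_nonneg _)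
  obtain ⟨c1, c10, -, H1⟩ := gen_chernoff ρ hρ 0 0 (x ^ 2 / q ^ 2) (η / 2) (by positivity)
  obtain ⟨c2, c20, -, H2⟩ := gen_chernoff ρ hρ 0 (-(x ^ 2 / q)) 0 (η / 2) (by positivity)
  obtain ⟨c3, c30, -, H3⟩ := gen_chernoff ρ hρ x' 0 0 (η / 2) (by positivity)
  set c := min c1 (min c2 c3) with hc
  have hc0 : 0 < c := by positivity
  obtain ⟨d1, d10, H1⟩ := H1 c hc0 (min_le_left _ _)
  obtain ⟨d2, d20, H2⟩ := H2 c hc0 ((min_le_right _ _).trans (min_le_left _ _))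
  obtain ⟨d3, d30, H3⟩ := H3 c hc0 ((min_le_right _ _).trans (min_le_right _ _))
  refine ⟨min d1 (min d2 d3), by positivity, ?_⟩
  intro Ω mΩ P _ F N z a d S hd
  have H1 := H1 Ω P F N z a d S (hd.trans (min_le_left _ _)) (a ^ 2 * x ^ 2)
  have H2 := H2 Ω P F N z a d S (hd.trans ((min_le_right _ _).trans (min_le_left _ _)))
    (-(a ^ 2 * (x ^ 2 / q * (1 - q))))
  have H3 := H3 Ω P F N z a d S (hd.trans ((min_le_right _ _).trans (min_le_right _ _)))
    (a ^ 2 * x' ^ 2)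
  have ha := S.apos
  have ha2 : 0 < a ^ 2 := by positivity
  have hxa : 0 ≤ a ^ 2 * x ^ 2 := by positivity
  have e1 : Real.exp (a ^ 2 * (0 ^ 2 / 2 + 0 + η / 2) - a ^ 2 * x ^ 2) ≤
      Real.exp (-(a ^ 2 * (x ^ 2 / 2 - η))) := Real.exp_le_exp.2 (by nlinarith)
  have e2 : Real.exp (a ^ 2 * (0 ^ 2 / 2 + -(x ^ 2 / q) + η / 2) - -(a ^ 2 * (x ^ 2 / q * (1 - q)))) ≤
      Real.exp (-(a ^ 2 * (x ^ 2 / 2 - η))) := by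
    refine Real.exp_le_exp.2 ?_
    have : a ^ 2 * (0 ^ 2 / 2 + -(x ^ 2 / q) + η / 2) - -(a ^ 2 * (x ^ 2 / q * (1 - q))) =
      a ^ 2 * (η / 2) - a ^ 2 * x ^ 2 := by field_simp; ring
    rw [this]
    nlinarith
  have e3 : Real.exp (a ^ 2 * (x' ^ 2 / 2 + 0 + η / 2) - a ^ 2 * x' ^ 2) ≤
      Real.exp (-(a ^ 2 * (x ^ 2 / 2 - η))) := Real.exp_le_exp.2 (by nlinarith)
  have hU := (measureReal_union_le _ _).trans
    (add_le_add (H1.trans e1) ((measureReal_union_le _ _).trans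
    (add_le_add (H2.trans e2) (H3.trans e3))))
  refine le_trans (le_trans (measureReal_mono ?_ (measure_ne_top _ _)) hU) (by linarith)
  · intro ω hω
    rcases sum_trichotomy N (fun j => z j ω) c a q x ha hq hq1 hqx hω with h | h | h
    · left
      simp only [Set.mem_ofPred_eq]
      have : a ^ 2 * x ^ 2 = x ^ 2 / q ^ 2 * (q ^ 2 * a ^ 2) := by field_simp
      rw [this]
      have : x ^ 2 / q ^ 2 * (q ^ 2 * a ^ 2) ≤
        x ^ 2 / q ^ 2 * ∑ j ∈ Finset.range N, ib c (z j ω) := by gcongr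
      linarith
    · right; left
      simp only [Set.mem_ofPred_eq]
      have : x ^ 2 / q * ∑ j ∈ Finset.range N, tr c (z j ω) ^ 2 ≤ x ^ 2 / q * ((1 - q) * a ^ 2) := by
        gcongr
      linarith
    · right; right
      simp only [Set.mem_ofPred_eq]
      have : x' * (x' * a ^ 2) ≤ x' * ∑ j ∈ Finset.range N, tr c (z j ω) := by gcongr
      linarith

set_option linter.unusedSectionVars false
set_option linter.unusedVariables false

/-- survival indicator -/
noncomputable def sv (c z V : ℝ) : ℝ := if z ^ 2 ≤ max (c ^ 2) (4 * V) then 1 else 0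
/-- weights used in the lower bound -/
noncomputable def lw (l s c z V : ℝ) : ℝ := sv c z V * Real.exp (l * tr c z + s * tr c z ^ 2)

lemma sv_nonneg (c z V : ℝ) : 0 ≤ sv c z V := by unfold sv; split_ifs <;> norm_num
lemma sv_le_one (c z V : ℝ) : sv c z V ≤ 1 := by unfold sv; split_ifs <;> norm_num
lemma sv_small {c z V : ℝ} (h : |z| ≤ c) : sv c z V = 1 := by
  unfold sv
  rw [if_pos]
  refine le_trans ?_ (le_max_left _ _)
  rw [← sq_abs]; gcongr
lemma lw_nonneg (l s c z V : ℝ) : 0 ≤ lw l s c z V := mul_nonneg (sv_nonneg _ _ _) (Real.exp_pos _).le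
lemma lw_small {l s c z V : ℝ} (h : |z| ≤ c) : lw l s c z V = Real.exp (l * z + s * z ^ 2) := by
  simp [lw, sv_small h, tr, h]
lemma lw_big {l s c z V : ℝ} (h : c < |z|) : lw l s c z V ≤ 1 := by
  simp [lw, tr, not_le.2 h, sv_le_one]

lemma measurable_lw {Ω : Type} {m : MeasurableSpace Ω} (l s c : ℝ) {f v : Ω → ℝ}
    (hf : Measurable f) (hv : Measurable v) : Measurable (fun ω => lw l s c (f ω) (v ω)) := by
  have h1 : Measurable (fun ω => sv c (f ω) (v ω)) := by
    unfold sv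
    refine Measurable.ite (measurableSet_le (hf.pow_const 2) ?_) measurable_const measurable_const
    exact measurable_const.max (measurable_const.mul hv)
  have h2 : Measurable (fun ω => tr c (f ω)) := (measurable_tr c).comp hf
  unfold lw
  fun_prop

lemma prod_lw (N : ℕ) (z V : ℕ → ℝ) (l s c : ℝ) :
    ∏ j ∈ Finset.range N, lw l s c (z j) (V j) = (∏ j ∈ Finset.range N, sv c (z j) (V j)) *
      Real.exp (l * ∑ j ∈ Finset.range N, tr c (z j) + s * ∑ j ∈ Finset.range N, tr c (z j) ^ 2) := by
  simp only [lw]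
  rw [Finset.prod_mul_distrib, ← Real.exp_sum, Finset.sum_add_distrib, Finset.mul_sum,
    Finset.mul_sum]

lemma prod_sv (N : ℕ) (z V : ℕ → ℝ) (c : ℝ) :
    (∏ j ∈ Finset.range N, sv c (z j) (V j)) = 0 ∨
    ((∏ j ∈ Finset.range N, sv c (z j) (V j)) = 1 ∧ ∀ j < N, z j ^ 2 ≤ max (c ^ 2) (4 * V j)) := by
  by_cases h : ∀ j < N, z j ^ 2 ≤ max (c ^ 2) (4 * V j)
  · right
    refine ⟨Finset.prod_eq_one fun j hj => ?_, h⟩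
    unfold sv; rw [if_pos (h j (Finset.mem_range.1 hj))]
  · left
    push Not at h
    obtain ⟨j, hj, h⟩ := h
    refine Finset.prod_eq_zero (Finset.mem_range.2 hj) ?_
    unfold sv; rw [if_neg (not_le.2 h)]

lemma lw_measurable {Ω : Type} [mΩ : MeasurableSpace Ω] {P : Measure Ω} [IsProbabilityMeasure P]
    {F : ℕ → MeasurableSpace Ω} {N : ℕ} {z : ℕ → Ω → ℝ} {ρ a d : ℝ} (S : Setup P F N z ρ a d)
    (l s c : ℝ) : ∀ j < N, StronglyMeasurable[F (j + 1)]
      (fun ω => lw l s c (z j ω) ((P[fun ω => z j ω ^ 2|F j]) ω)) := by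
  intro j hj
  have hv : StronglyMeasurable[F (j + 1)] (P[fun ω => z j ω ^ 2|F j]) :=
    stronglyMeasurable_condExp.mono (S.mono (by omega))
  exact (measurable_lw l s c (S.zm j hj).measurable hv.measurable).stronglyMeasurable

/-- conditional survival probability -/
lemma crude_lower {Ω : Type} [mΩ : MeasurableSpace Ω] {P : Measure Ω} [IsProbabilityMeasure P]
    {F : ℕ → MeasurableSpace Ω} {N : ℕ} {z : ℕ → Ω → ℝ} {ρ a d : ℝ} (S : Setup P F N z ρ a d)
    (l c : ℝ) (hc : 0 < c) (hc1 : c ≤ 1) (j : ℕ) (hj : j < N)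
    (hgi : Integrable (fun ω => lw l 0 c (z j ω) ((P[fun ω => z j ω ^ 2|F j]) ω)) P) :
    ∀ᵐ ω ∂P, Real.exp (-(|l| + 1)) ≤
      (P[fun ω => lw l 0 c (z j ω) ((P[fun ω => z j ω ^ 2|F j]) ω)|F j]) ω := by
  set V := P[fun ω => z j ω ^ 2|F j] with hV
  set R : Ω → ℝ := fun ω => Real.exp (-|l|) * (max (c ^ 2) (4 * V ω))⁻¹ with hR
  have hVm : Measurable[F j] V := stronglyMeasurable_condExp.measurable
  have hRm : StronglyMeasurable[F j] R := by
    have : Measurable[F j] R :=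
      measurable_const.mul ((measurable_const.max (measurable_const.mul hVm)).inv)
    exact this.stronglyMeasurable
  have hpos : ∀ ω, 0 < max (c ^ 2) (4 * V ω) := fun ω => lt_of_lt_of_le (by positivity) (le_max_left _ _)
  have hRb : ∀ᵐ ω ∂P, ‖R ω‖ ≤ Real.exp (-|l|) * (c ^ 2)⁻¹ := ae_of_all _ fun ω => by
    rw [Real.norm_of_nonneg (mul_nonneg (Real.exp_pos _).le (inv_nonneg.2 (hpos ω).le))]
    have : (max (c ^ 2) (4 * V ω))⁻¹ ≤ (c ^ 2)⁻¹ := inv_anti₀ (by positivity) (le_max_left _ _)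
    gcongr
  have hpull := condExp_stronglyMeasurable_mul_of_bound (S.le j) hRm (S.int2 j hj) _ hRb
  have hRi : Integrable (R * fun ω => z j ω ^ 2) P :=
    (S.int2 j hj).bdd_mul (hRm.mono (S.le j)).aestronglyMeasurable hRb
  have hsub := condExp_sub (integrable_const (μ := P) (Real.exp (-|l|))) hRi (F j)
  have hcst := condExp_const (μ := P) (S.le j) (Real.exp (-|l|))
  have hmono := condExp_mono (m := F j) ((integrable_const (μ := P) (Real.exp (-|l|))).sub hRi) hgi
    (ae_of_all _ fun ω => by
      simp only [Pi.sub_apply, Pi.mul_apply]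
      have htr : |tr c (z j ω)| ≤ 1 := by
        unfold tr; split_ifs with h
        · linarith
        · simp
      have hl : -|l| ≤ l * tr c (z j ω) := by
        have : |l * tr c (z j ω)| ≤ |l| * 1 := by rw [abs_mul]; gcongr
        linarith [neg_abs_le (l * tr c (z j ω))]
      have hexp := Real.exp_le_exp.2 hl
      have e0 := Real.exp_pos (-|l|)
      unfold lw sv
      split_ifs with h
      · have : 0 ≤ R ω * z j ω ^ 2 :=
          mul_nonneg (mul_nonneg e0.le (inv_nonneg.2 (hpos ω).le)) (sq_nonneg _)
        simp only [zero_mul, add_zero, one_mul]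
        linarith
      · push Not at h
        rw [hR]
        have : 1 ≤ (max (c ^ 2) (4 * V ω))⁻¹ * z j ω ^ 2 := by
          rw [inv_mul_eq_div, one_le_div (hpos ω)]; exact h.le
        simp only [zero_mul]
        nlinarith)
  filter_upwards [hpull, hsub, hmono] with ω h1 h2 h3
  refine le_trans ?_ h3
  rw [h2, Pi.sub_apply, h1, hcst, Pi.mul_apply]
  have h4 : (max (c ^ 2) (4 * V ω))⁻¹ * V ω ≤ 1 / 4 := by
    rw [inv_mul_eq_div, div_le_iff₀ (hpos ω)]
    linarith [le_max_right (c ^ 2) (4 * V ω)]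
  have e0 := Real.exp_pos (-|l|)
  have e1 : Real.exp (-(|l| + 1)) = Real.exp (-|l|) * Real.exp (-1) := by
    rw [← Real.exp_add]; congr 1; ring
  have e2 : Real.exp (-1) ≤ 1 / 2 := by
    rw [Real.exp_neg, inv_eq_one_div]
    have := Real.add_one_le_exp (1:ℝ)
    exact one_div_le_one_div_of_le (by norm_num) (by linarith)
  rw [e1]
  show _ ≤ Real.exp (-|l|) - Real.exp (-|l|) * (max (c ^ 2) (4 * V ω))⁻¹ * V ω
  nlinarith

lemma gen_lower (ρ : ℝ) (hρ : 0 < ρ) (l η : ℝ) (hη : 0 < η) :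
    ∃ c0 : ℝ, 0 < c0 ∧ c0 ≤ 1 ∧ ∀ c, 0 < c → c ≤ c0 → ∃ d0 : ℝ, 0 < d0 ∧
      ∀ (Ω : Type) [mΩ : MeasurableSpace Ω] (P : Measure Ω) [IsProbabilityMeasure P]
        (F : ℕ → MeasurableSpace Ω) (N : ℕ) (z : ℕ → Ω → ℝ) (a d : ℝ),
        Setup P F N z ρ a d → d ≤ d0 →
        Real.exp (a ^ 2 * (l ^ 2 / 2 - η)) ≤
        ∫ ω, ∏ j ∈ Finset.range N, lw l 0 c (z j ω) ((P[fun ω => z j ω ^ 2|F j]) ω) ∂P := by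
  obtain ⟨c0, h0, h1, H⟩ := expansion_full ρ hρ l 0 (η / 3) (by positivity)
  refine ⟨c0, h0, h1, fun c hc hcc => ?_⟩
  obtain ⟨K, hK, H⟩ := H c hc hcc 1 zero_le_one
  obtain ⟨τ, K0, K', hτ, hK0, hK', Hsq, Hc⟩ :=
    combine_lower ρ hρ (l ^ 2 / 2 - η / 3) (η / 3) K (|l| + 1) (by positivity) hK (by positivity)
  set A : ℝ := l ^ 2 / 2 - η / 3 - η / 3 with hA
  refine ⟨(η / 3) / (|A| + |-K'| + 1), by positivity, ?_⟩
  intro Ω mΩ P _ F N z a d S hd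
  rw [le_div_iff₀ (by positivity)] at hd
  have hd0 := S.d_nonneg
  set g : ℕ → Ω → ℝ := fun j ω => lw l 0 c (z j ω) ((P[fun ω => z j ω ^ 2|F j]) ω) with hg
  have gm : ∀ j < N, StronglyMeasurable[F (j + 1)] (g j) := lw_measurable S l 0 c
  have gG : ∀ j < N, ∀ ω, g j ω ≤ max 1 (Real.exp |l|) := by
    intro j hj ω
    rcases le_or_gt |z j ω| c with h | h
    · rw [hg]
      simp only
      rw [lw_small h]
      refine le_trans (Real.exp_le_exp.2 ?_) (le_max_right _ _)
      have hz1 : |z j ω| ≤ 1 := h.trans (hcc.trans h1)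
      have e1 : l * z j ω ≤ |l| * 1 := by
        refine (le_abs_self _).trans ?_
        rw [abs_mul]; gcongr
      linarith
    · exact (lw_big h).trans (le_max_left _ _)
  have D := S.expData g _ A (-K') gm (fun j hj ω => lw_nonneg _ _ _ _ _) gG
  refine D.lower _ ?_ ?_
  · intro j hj
    have gi := D.facts.2.2.2.2 j hj
    have b1 := S.le_cond 1 l (l ^ 2 / 2 - η / 3) (-K) j hj (g j) gi (fun ω => by
      have := (abs_le.1 (H (z j ω) (g j ω) (lw_nonneg _ _ _ _ _) (fun h => lw_small h)
        (fun h => lw_big h))).1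
      linarith)
    have b2 := crude_lower S l c hc (hcc.trans h1) j hj gi
    have b3 := S.cond_le τ 0 0 K0 j hj (fun ω => z j ω ^ 2) (S.int2 j hj) (fun ω => by
      have := Hsq (z j ω)
      linarith)
    filter_upwards [b1, b2, b3, Setup.V_nonneg (P := P) (F := F) (z := z),
      Setup.M_nonneg (P := P) (F := F) (z := z) (ρ := ρ)] with ω b1 b2 b3 b4 b5
    have := Hc _ _ _ (b4 j) (b5 j) (by linarith) (by linarith) b2
    convert this using 2
    rw [hA]; ring
  · filter_upwards [S.sum_bound A (-K') (η / 3) (by linarith)] with ω hω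
    have := (abs_le.1 hω).1
    rw [hA] at *
    linarith

lemma survivors (ρ : ℝ) (hρ : 0 < ρ) (c : ℝ) (hc : 0 < c) : ∃ K1 : ℝ, 0 < K1 ∧
      ∀ (Ω : Type) [mΩ : MeasurableSpace Ω] (P : Measure Ω) [IsProbabilityMeasure P]
        (F : ℕ → MeasurableSpace Ω) (N : ℕ) (z : ℕ → Ω → ℝ) (a d : ℝ),
        Setup P F N z ρ a d → ∀ᵐ ω ∂P,
        (∀ j < N, z j ω ^ 2 ≤ max (c ^ 2) (4 * (P[fun ω => z j ω ^ 2|F j]) ω)) →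
        |∑ j ∈ Finset.range N, z j ω - ∑ j ∈ Finset.range N, tr c (z j ω)| ≤ K1 * (d * a ^ 2) ∧
        |∑ j ∈ Finset.range N, z j ω ^ 2 - ∑ j ∈ Finset.range N, tr c (z j ω) ^ 2| ≤
          K1 * (d * a ^ 2) := by
  obtain ⟨K0, hK0, Hsq⟩ := sq_le_rpow ρ hρ (c ^ 2 / 8) (by positivity)
  refine ⟨8 * K0 * (1 + 1 / c), by positivity, ?_⟩
  intro Ω mΩ P _ F N z a d S
  have b3 : ∀ᵐ ω ∂P, ∀ j, j < N → (P[fun ω => z j ω ^ 2|F j]) ω ≤ c ^ 2 / 8 + 0 * (P[fun ω => z j ω ^ 2|F j]) ω +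
      K0 * (P[fun ω => |z j ω| ^ (2 + ρ)|F j]) ω := by
    rw [ae_all_iff]; intro j
    rw [Filter.eventually_imp_distrib_left]
    intro hj
    exact S.cond_le (c ^ 2 / 8) 0 0 K0 j hj (fun ω => z j ω ^ 2) (S.int2 j hj) (fun ω => by
      have := Hsq (z j ω)
      linarith)
  filter_upwards [b3, S.M, Setup.M_nonneg (P := P) (F := F) (z := z) (ρ := ρ)] with ω b3 b4 b5 hs
  have key : ∀ j ∈ Finset.range N,
      |z j ω - tr c (z j ω)| ≤ 8 * K0 * (1 + 1 / c) * (P[fun ω => |z j ω| ^ (2 + ρ)|F j]) ω ∧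
      |z j ω ^ 2 - tr c (z j ω) ^ 2| ≤
        8 * K0 * (1 + 1 / c) * (P[fun ω => |z j ω| ^ (2 + ρ)|F j]) ω := by
    intro j hj
    have hj := Finset.mem_range.1 hj
    have hs := hs j hj
    have b3 := b3 j hj
    have b5 := b5 j
    generalize (P[fun ω => |z j ω| ^ (2 + ρ)|F j]) ω = M at *
    generalize (P[fun ω => z j ω ^ 2|F j]) ω = V at *
    generalize z j ω = x at *
    have hp : 0 ≤ 8 * K0 * (1 + 1 / c) * M := by positivity
    unfold tr
    split_ifs with h
    · simpa using hp
    · push Not at h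
      have hx2 : c ^ 2 < x ^ 2 := by rw [← sq_abs x]; gcongr
      have hx4 : x ^ 2 ≤ 4 * V := by
        rcases le_max_iff.1 hs with h | h
        · linarith
        · exact h
      have hV : x ^ 2 ≤ 8 * K0 * M := by linarith
      have e : 8 * K0 * (1 + 1 / c) * M = 8 * K0 * M + (8 * K0 * M) / c := by ring
      have hM0 : 0 ≤ 8 * K0 * M := by positivity
      have hM1 : 0 ≤ 8 * K0 * M / c := by positivity
      rw [e]
      constructor
      · rw [sub_zero]
        have : |x| ≤ 8 * K0 * M / c := by
          rw [le_div_iff₀ hc]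
          have : |x| * |x| = x ^ 2 := by rw [← sq_abs]; ring
          nlinarith [abs_nonneg x]
        linarith
      · simp only [ne_eq, OfNat.ofNat_ne_zero, not_false_eq_true, zero_pow, sub_zero, abs_pow, sq_abs]
        linarith
  have hsum : ∑ j ∈ Finset.range N, 8 * K0 * (1 + 1 / c) * (P[fun ω => |z j ω| ^ (2 + ρ)|F j]) ω ≤
      8 * K0 * (1 + 1 / c) * (d * a ^ 2) := by
    rw [← Finset.mul_sum]; gcongr
  rw [← Finset.sum_sub_distrib, ← Finset.sum_sub_distrib]
  exact ⟨((Finset.abs_sum_le_sum_abs _ _).trans (Finset.sum_le_sum fun j hj => (key j hj).1)).trans hsum,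
    ((Finset.abs_sum_le_sum_abs _ _).trans (Finset.sum_le_sum fun j hj => (key j hj).2)).trans hsum⟩

set_option linter.unusedSectionVars false
set_option linter.unusedVariables false

lemma lw_upper (ρ : ℝ) (hρ : 0 < ρ) (l s η : ℝ) (hη : 0 < η) :
    ∃ c0 : ℝ, 0 < c0 ∧ c0 ≤ 1 ∧ ∀ c, 0 < c → c ≤ c0 → ∃ d0 : ℝ, 0 < d0 ∧
      ∀ (Ω : Type) [mΩ : MeasurableSpace Ω] (P : Measure Ω) [IsProbabilityMeasure P]
        (F : ℕ → MeasurableSpace Ω) (N : ℕ) (z : ℕ → Ω → ℝ) (a d : ℝ),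
        Setup P F N z ρ a d → d ≤ d0 →
        Integrable (fun ω => ∏ j ∈ Finset.range N,
          lw l s c (z j ω) ((P[fun ω => z j ω ^ 2|F j]) ω)) P ∧
        ∫ ω, ∏ j ∈ Finset.range N, lw l s c (z j ω) ((P[fun ω => z j ω ^ 2|F j]) ω) ∂P ≤
          Real.exp (a ^ 2 * (l ^ 2 / 2 + s + η)) := by
  obtain ⟨c0, h0, h1, H⟩ := gen_upper ρ hρ l s η hη
  refine ⟨c0, h0, h1, fun c hc hcc => ?_⟩
  obtain ⟨d0, hd0, H⟩ := H c hc hcc 1 zero_le_one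
  refine ⟨d0, hd0, ?_⟩
  intro Ω mΩ P _ F N z a d S hd
  exact H Ω P F N z a d S hd _ (lw_measurable S l s c) (fun j hj ω => lw_nonneg _ _ _ _ _)
    (fun j hj ω h => lw_small h) (fun j hj ω h => lw_big h)

lemma tilt_pointwise (p T Q A y r : ℝ) (hp : p = 0 ∨ p = 1) (hr : 0 < r) (hA : 0 < A)
    (I : ℝ) (hI0 : 0 ≤ I) (hI : p = 1 → |T - y * A| ≤ r * A → |Q - A| ≤ r * A → I = 1) :
    p * Real.exp (y * T + 0 * Q) ≤ Real.exp (A * (y ^ 2 + |y| * r)) * I +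
      (Real.exp (-(r * (y + r) * A)) * (p * Real.exp ((y + r) * T + 0 * Q)) +
      (Real.exp (r * (y - r) * A) * (p * Real.exp ((y - r) * T + 0 * Q)) +
      (Real.exp (-((1 + r) * A)) * (p * Real.exp (y * T + 1 * Q)) +
      Real.exp ((1 - r) * A) * (p * Real.exp (y * T + (-1) * Q))))) := by
  rcases hp with rfl | rfl
  · simp; positivity
  have n0 : 0 ≤ Real.exp (A * (y ^ 2 + |y| * r)) * I := by positivity
  simp only [one_mul, ← Real.exp_add, zero_mul, add_zero]
  have n1 := Real.exp_pos (-(r * (y + r) * A) + (y + r) * T)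
  have n2 := Real.exp_pos (r * (y - r) * A + (y - r) * T)
  have n3 := Real.exp_pos (-((1 + r) * A) + (y * T + Q))
  have n4 := Real.exp_pos ((1 - r) * A + (y * T + -1 * Q))
  by_cases h1 : y * A + r * A < T
  · have : Real.exp (y * T) ≤ Real.exp (-(r * (y + r) * A) + (y + r) * T) :=
      Real.exp_le_exp.2 (by nlinarith)
    linarith
  by_cases h2 : T < y * A - r * A
  · have : Real.exp (y * T) ≤ Real.exp (r * (y - r) * A + (y - r) * T) :=
      Real.exp_le_exp.2 (by nlinarith)
    linarith
  by_cases h3 : A + r * A < Q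
  · have : Real.exp (y * T) ≤ Real.exp (-((1 + r) * A) + (y * T + Q)) :=
      Real.exp_le_exp.2 (by nlinarith)
    linarith
  by_cases h4 : Q < A - r * A
  · have : Real.exp (y * T) ≤ Real.exp ((1 - r) * A + (y * T + -1 * Q)) :=
      Real.exp_le_exp.2 (by nlinarith)
    linarith
  push Not at h1 h2 h3 h4
  have hT : |T - y * A| ≤ r * A := abs_le.2 ⟨by linarith, by linarith⟩
  have hQ : |Q - A| ≤ r * A := abs_le.2 ⟨by linarith, by linarith⟩
  rw [hI rfl hT hQ, mul_one]
  have : Real.exp (y * T) ≤ Real.exp (A * (y ^ 2 + |y| * r)) := by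
    refine Real.exp_le_exp.2 ?_
    have : y * (T - y * A) ≤ |y| * (r * A) := by
      refine (le_abs_self _).trans ?_
      rw [abs_mul]; gcongr
    nlinarith
  linarith

lemma choose_r (y r' η' : ℝ) (hr' : 0 < r') (hη' : 0 < η') : ∃ r : ℝ, 0 < r ∧ r ≤ 1 ∧
    |y| * r ≤ η' / 2 ∧ ∀ p Q : ℝ, |p - y| ≤ 2 * r → |Q - 1| ≤ 2 * r → |p / √Q - y| < r' := by
  have hcont : ContinuousAt (fun x : ℝ × ℝ => x.1 / √x.2) (y, 1) := by
    apply ContinuousAt.div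
    · fun_prop
    · fun_prop
    · simp
  obtain ⟨e, he, H⟩ := Metric.continuousAt_iff.1 hcont r' hr'
  refine ⟨min 1 (min (e / 4) (η' / (2 * (|y| + 1)))), by positivity, min_le_left _ _, ?_, ?_⟩
  · have h1 : min 1 (min (e / 4) (η' / (2 * (|y| + 1)))) ≤ η' / (2 * (|y| + 1)) :=
      (min_le_right _ _).trans (min_le_right _ _)
    calc |y| * _ ≤ |y| * (η' / (2 * (|y| + 1))) := by gcongr
      _ = (η' / 2) * (|y| / (|y| + 1)) := by field_simp
      _ ≤ (η' / 2) * 1 := by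
        gcongr
        rw [div_le_one (by positivity)]; linarith
      _ = _ := by ring
  · intro p Q h1 h2
    have h3 : min 1 (min (e / 4) (η' / (2 * (|y| + 1)))) ≤ e / 4 :=
      (min_le_right _ _).trans (min_le_left _ _)
    have := @H (p, Q) (by
      rw [Prod.dist_eq, max_lt_iff, Real.dist_eq, Real.dist_eq]
      constructor
      · simp only; linarith
      · simp only; linarith)
    simpa [Real.dist_eq] using this

lemma int5 {Ω : Type} [mΩ : MeasurableSpace Ω] {P : Measure Ω} {f e f1 f2 f3 f4 : Ω → ℝ}
    (hf : Integrable f P) (he : Integrable e P) (h1 : Integrable f1 P) (h2 : Integrable f2 P)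
    (h3 : Integrable f3 P) (h4 : Integrable f4 P) (k0 k1 k2 k3 k4 : ℝ)
    (h : ∀ ω, f ω ≤ k0 * e ω + (k1 * f1 ω + (k2 * f2 ω + (k3 * f3 ω + k4 * f4 ω)))) :
    ∫ ω, f ω ∂P ≤ k0 * ∫ ω, e ω ∂P + (k1 * ∫ ω, f1 ω ∂P + (k2 * ∫ ω, f2 ω ∂P +
      (k3 * ∫ ω, f3 ω ∂P + k4 * ∫ ω, f4 ω ∂P))) := by
  have j4 : Integrable (fun ω => k3 * f3 ω + k4 * f4 ω) P := (h3.const_mul _).add (h4.const_mul _)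
  have j3 : Integrable (fun ω => k2 * f2 ω + (k3 * f3 ω + k4 * f4 ω)) P := (h2.const_mul _).add j4
  have j2 : Integrable (fun ω => k1 * f1 ω + (k2 * f2 ω + (k3 * f3 ω + k4 * f4 ω))) P :=
    (h1.const_mul _).add j3
  have hIneq := integral_mono hf ((he.const_mul k0).add j2) h
  refine hIneq.trans (le_of_eq ?_)
  rw [integral_add' (he.const_mul k0) j2, integral_add (h1.const_mul _) j3,
    integral_add (h2.const_mul _) j4, integral_add (h3.const_mul _) (h4.const_mul _),
    integral_const_mul, integral_const_mul, integral_const_mul, integral_const_mul,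
    integral_const_mul]

set_option maxHeartbeats 1000000 in
lemma core_lower (ρ : ℝ) (hρ : 0 < ρ) (y r' η' : ℝ) (hr' : 0 < r') (hη' : 0 < η') :
    ∃ d0 a0 : ℝ, 0 < d0 ∧
      ∀ (Ω : Type) [mΩ : MeasurableSpace Ω] (P : Measure Ω) [IsProbabilityMeasure P]
        (F : ℕ → MeasurableSpace Ω) (N : ℕ) (z : ℕ → Ω → ℝ) (a d : ℝ),
        Setup P F N z ρ a d → d ≤ d0 → a0 ≤ a →
        Real.exp (-(a ^ 2 * (y ^ 2 / 2 + η'))) ≤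
        P.real {ω | |(∑ j ∈ Finset.range N, z j ω) /
          (a * √(∑ j ∈ Finset.range N, z j ω ^ 2)) - y| < r'} := by
  obtain ⟨r, hr, hr1, hyr, Hr⟩ := choose_r y r' η' hr' hη'
  set η : ℝ := min (r ^ 2 / 8) (η' / 4) with hη
  have hη0 : 0 < η := by positivity
  have hηr : η ≤ r ^ 2 / 8 := min_le_left _ _
  have hηη : η ≤ η' / 4 := min_le_right _ _
  obtain ⟨c0, h0, h01, H0⟩ := gen_lower ρ hρ y η hη0
  obtain ⟨c1, h1, h11, H1⟩ := lw_upper ρ hρ (y + r) 0 η hη0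
  obtain ⟨c2, h2, h21, H2⟩ := lw_upper ρ hρ (y - r) 0 η hη0
  obtain ⟨c3, h3, h31, H3⟩ := lw_upper ρ hρ y 1 η hη0
  obtain ⟨c4, h4, h41, H4⟩ := lw_upper ρ hρ y (-1) η hη0
  obtain ⟨c5, h5, h51, H5⟩ := lw_upper ρ hρ y 0 η hη0
  obtain ⟨c, hc, k0, k1, k2, k3, k4, k5⟩ : ∃ c : ℝ, 0 < c ∧ c ≤ c0 ∧ c ≤ c1 ∧ c ≤ c2 ∧ c ≤ c3 ∧
      c ≤ c4 ∧ c ≤ c5 :=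
    ⟨min c0 (min c1 (min c2 (min c3 (min c4 c5)))), by positivity, by simp, by simp, by simp,
      by simp, by simp, by simp⟩
  obtain ⟨d0, g0, H0⟩ := H0 c hc k0
  obtain ⟨d1, g1, H1⟩ := H1 c hc k1
  obtain ⟨d2, g2, H2⟩ := H2 c hc k2
  obtain ⟨d3, g3, H3⟩ := H3 c hc k3
  obtain ⟨d4, g4, H4⟩ := H4 c hc k4
  obtain ⟨d5, g5, H5⟩ := H5 c hc k5
  obtain ⟨K1, hK1, Hs⟩ := survivors ρ hρ c hc
  obtain ⟨dd, hdd, m0, m1, m2, m3, m4, m5, m6⟩ : ∃ d : ℝ, 0 < d ∧ d ≤ d0 ∧ d ≤ d1 ∧ d ≤ d2 ∧ d ≤ d3 ∧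
      d ≤ d4 ∧ d ≤ d5 ∧ d ≤ r / K1 :=
    ⟨min d0 (min d1 (min d2 (min d3 (min d4 (min d5 (r / K1)))))), by positivity, by simp, by simp,
      by simp, by simp, by simp, by simp, by simp⟩
  refine ⟨dd, max 1 (3 / η), hdd, ?_⟩
  intro Ω mΩ P _ F N z a d S hd ha
  have ha1 : 1 ≤ a := (le_max_left _ _).trans ha
  have ha2 : 3 / η ≤ a := (le_max_right _ _).trans ha
  have hA : 0 < a ^ 2 := by have := S.apos; positivity
  have hAη : 3 ≤ η * a ^ 2 := by
    rw [div_le_iff₀ hη0] at ha2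
    have : a ≤ a ^ 2 := by rw [sq]; exact le_mul_of_one_le_left S.apos.le ha1
    have := mul_le_mul_of_nonneg_left this hη0.le
    linarith
  have H0 := H0 Ω P F N z a d S (hd.trans m0)
  obtain ⟨i1, H1⟩ := H1 Ω P F N z a d S (hd.trans m1)
  obtain ⟨i2, H2⟩ := H2 Ω P F N z a d S (hd.trans m2)
  obtain ⟨i3, H3⟩ := H3 Ω P F N z a d S (hd.trans m3)
  obtain ⟨i4, H4⟩ := H4 Ω P F N z a d S (hd.trans m4)
  obtain ⟨i5, H5⟩ := H5 Ω P F N z a d S (hd.trans m5)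
  have hKd : K1 * d ≤ r := by
    have := hd.trans m6
    rw [le_div_iff₀ hK1] at this; linarith
  set V : ℕ → Ω → ℝ := fun j => P[fun ω => z j ω ^ 2|F j] with hV
  set E : Set Ω := {ω | 0 < ∏ j ∈ Finset.range N, lw y 0 c (z j ω) (V j ω) ∧
    |∑ j ∈ Finset.range N, tr c (z j ω) - y * a ^ 2| ≤ r * a ^ 2 ∧
    |∑ j ∈ Finset.range N, tr c (z j ω) ^ 2 - a ^ 2| ≤ r * a ^ 2} with hE
  have hzm : ∀ j ∈ Finset.range N, Measurable (z j) := fun j hj =>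
    ((S.zm j (Finset.mem_range.1 hj)).mono (S.le _)).measurable
  have htm : ∀ j ∈ Finset.range N, Measurable (fun ω => tr c (z j ω)) := fun j hj =>
    (measurable_tr c).comp (hzm j hj)
  have hVm : ∀ j, Measurable (V j) := fun j =>
    (stronglyMeasurable_condExp.mono (S.le j)).measurable
  have hEm : MeasurableSet E := by
    have q1 : Measurable (fun ω => ∏ j ∈ Finset.range N, lw y 0 c (z j ω) (V j ω)) :=
      Finset.measurable_fun_prod _ fun j hj => measurable_lw _ _ _ (hzm j hj) (hVm j)
    have q2 : Measurable (fun ω => ∑ j ∈ Finset.range N, tr c (z j ω)) :=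
      Finset.measurable_fun_sum _ htm
    have q3 : Measurable (fun ω => ∑ j ∈ Finset.range N, tr c (z j ω) ^ 2) :=
      Finset.measurable_fun_sum _ fun j hj => (htm j hj).pow_const 2
    have w1 : MeasurableSet {ω | 0 < ∏ j ∈ Finset.range N, lw y 0 c (z j ω) (V j ω)} :=
      measurableSet_lt measurable_const q1
    have w2 : MeasurableSet {ω | |∑ j ∈ Finset.range N, tr c (z j ω) - y * a ^ 2| ≤ r * a ^ 2} :=
      measurableSet_le (q2.sub_const _).abs measurable_const
    have w3 : MeasurableSet {ω | |∑ j ∈ Finset.range N, tr c (z j ω) ^ 2 - a ^ 2| ≤ r * a ^ 2} :=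
      measurableSet_le (q3.sub_const _).abs measurable_const
    exact w1.inter (w2.inter w3)
  have iE : Integrable (E.indicator (fun _ => (1:ℝ))) P := (integrable_const _).indicator hEm
  have ptw : ∀ ω, ∏ j ∈ Finset.range N, lw y 0 c (z j ω) (V j ω) ≤
      Real.exp (a ^ 2 * (y ^ 2 + |y| * r)) * E.indicator (fun _ => (1:ℝ)) ω +
      (Real.exp (-(r * (y + r) * a ^ 2)) * (∏ j ∈ Finset.range N, lw (y + r) 0 c (z j ω) (V j ω)) +
      (Real.exp (r * (y - r) * a ^ 2) * (∏ j ∈ Finset.range N, lw (y - r) 0 c (z j ω) (V j ω)) +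
      (Real.exp (-((1 + r) * a ^ 2)) * (∏ j ∈ Finset.range N, lw y 1 c (z j ω) (V j ω)) +
      Real.exp ((1 - r) * a ^ 2) * (∏ j ∈ Finset.range N, lw y (-1) c (z j ω) (V j ω))))) := by
    intro ω
    have hps := prod_sv N (fun j => z j ω) (fun j => V j ω) c
    have e := fun l s => prod_lw N (fun j => z j ω) (fun j => V j ω) l s c
    rw [e, e, e, e, e]
    refine tilt_pointwise _ _ _ _ y r (hps.imp id And.left) hr hA _
      (Set.indicator_nonneg (fun _ _ => zero_le_one) _) ?_
    intro hp hT hQ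
    rw [Set.indicator_of_mem]
    refine ⟨?_, hT, hQ⟩
    rw [e, hp, one_mul]; exact Real.exp_pos _
  have hIneq := int5 i5 iE i1 i2 i3 i4 _ _ _ _ _ ptw
  rw [integral_indicator_const _ hEm, smul_eq_mul, mul_one] at hIneq
  have bd : ∀ (u l s I : ℝ), I ≤ Real.exp (a ^ 2 * (l ^ 2 / 2 + s + η)) →
      u + a ^ 2 * (l ^ 2 / 2 + s + η) ≤ a ^ 2 * (y ^ 2 / 2 - 3 * η) →
      Real.exp u * I ≤ Real.exp (a ^ 2 * (y ^ 2 / 2 - 3 * η)) := by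
    intro u l s I hI hu
    calc Real.exp u * I ≤ Real.exp u * Real.exp (a ^ 2 * (l ^ 2 / 2 + s + η)) := by gcongr
      _ = Real.exp (u + a ^ 2 * (l ^ 2 / 2 + s + η)) := (Real.exp_add _ _).symm
      _ ≤ _ := Real.exp_le_exp.2 hu
  have hr2 : r ^ 2 ≤ r := by rw [sq]; exact mul_le_of_le_one_left hr.le hr1
  have z1 := bd (-(r * (y + r) * a ^ 2)) _ _ _ H1 (by
    have : a ^ 2 * (-r ^ 2 / 2 + 4 * η) ≤ 0 := mul_nonpos_of_nonneg_of_nonpos hA.le (by linarith)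
    linarith)
  have z2 := bd (r * (y - r) * a ^ 2) _ _ _ H2 (by
    have : a ^ 2 * (-r ^ 2 / 2 + 4 * η) ≤ 0 := mul_nonpos_of_nonneg_of_nonpos hA.le (by linarith)
    linarith)
  have z3 := bd (-((1 + r) * a ^ 2)) _ _ _ H3 (by
    have : a ^ 2 * (-r + 4 * η) ≤ 0 := mul_nonpos_of_nonneg_of_nonpos hA.le (by linarith)
    linarith)
  have z4 := bd ((1 - r) * a ^ 2) _ _ _ H4 (by
    have : a ^ 2 * (-r + 4 * η) ≤ 0 := mul_nonpos_of_nonneg_of_nonpos hA.le (by linarith)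
    linarith)
  have hmain : Real.exp (a ^ 2 * (y ^ 2 / 2 - η)) ≤ Real.exp (a ^ 2 * (y ^ 2 + |y| * r)) * P.real E +
      4 * Real.exp (a ^ 2 * (y ^ 2 / 2 - 3 * η)) := by linarith
  have h4 : 4 ≤ Real.exp (η * a ^ 2) := by
    have := Real.add_one_le_exp (η * a ^ 2); linarith
  have f1 : Real.exp (a ^ 2 * (y ^ 2 / 2 - η)) =
      Real.exp (η * a ^ 2) * Real.exp (a ^ 2 * (y ^ 2 / 2 - 2 * η)) := by
    rw [← Real.exp_add]; congr 1; ring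
  have f2 : Real.exp (a ^ 2 * (y ^ 2 / 2 - 2 * η)) =
      Real.exp (η * a ^ 2) * Real.exp (a ^ 2 * (y ^ 2 / 2 - 3 * η)) := by
    rw [← Real.exp_add]; congr 1; ring
  have f3 : Real.exp (a ^ 2 * (y ^ 2 / 2 - 2 * η)) ≤
      Real.exp (a ^ 2 * (y ^ 2 + |y| * r)) * P.real E := by
    have p1 := mul_le_mul_of_nonneg_right h4 (Real.exp_pos (a ^ 2 * (y ^ 2 / 2 - 2 * η))).le
    have p2 := mul_le_mul_of_nonneg_right h4 (Real.exp_pos (a ^ 2 * (y ^ 2 / 2 - 3 * η))).le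
    have p3 := Real.exp_pos (a ^ 2 * (y ^ 2 / 2 - 2 * η))
    linarith
  have f4 : Real.exp (-(a ^ 2 * (y ^ 2 / 2 + η'))) ≤ P.real E := by
    have p1 := Real.exp_pos (a ^ 2 * (y ^ 2 + |y| * r))
    have : Real.exp (a ^ 2 * (y ^ 2 + |y| * r)) * Real.exp (-(a ^ 2 * (y ^ 2 / 2 + η'))) ≤
        Real.exp (a ^ 2 * (y ^ 2 / 2 - 2 * η)) := by
      rw [← Real.exp_add]
      refine Real.exp_le_exp.2 ?_
      have : a ^ 2 * (|y| * r - η' + 2 * η) ≤ 0 :=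
        mul_nonpos_of_nonneg_of_nonpos hA.le (by linarith)
      linarith
    exact le_of_mul_le_mul_left (this.trans f3) p1
  refine f4.trans ?_
  refine ENNReal.toReal_mono (measure_ne_top _ _) (measure_mono_ae ?_)
  filter_upwards [Hs Ω P F N z a d S] with ω hs hω
  obtain ⟨e1, e2, e3⟩ := hω
  have hsv : ∀ j < N, z j ω ^ 2 ≤ max (c ^ 2) (4 * V j ω) := by
    rcases prod_sv N (fun j => z j ω) (fun j => V j ω) c with h | h
    · exfalso
      have := prod_lw N (fun j => z j ω) (fun j => V j ω) y 0 c
      rw [this, h, zero_mul] at e1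
      exact lt_irrefl _ e1
    · exact h.2
  obtain ⟨s1, s2⟩ := hs hsv
  have hKda : K1 * (d * a ^ 2) ≤ r * a ^ 2 := by
    have := mul_le_mul_of_nonneg_right hKd hA.le
    linarith
  generalize ∑ j ∈ Finset.range N, tr c (z j ω) = T at *
  generalize ∑ j ∈ Finset.range N, tr c (z j ω) ^ 2 = Q at *
  show |(∑ j ∈ Finset.range N, z j ω) / (a * √(∑ j ∈ Finset.range N, z j ω ^ 2)) - y| < r'
  generalize ∑ j ∈ Finset.range N, z j ω = p at *
  generalize ∑ j ∈ Finset.range N, z j ω ^ 2 = q at *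
  have hap := S.apos
  have := Hr (p / a ^ 2) (q / a ^ 2) (by
      have : p / a ^ 2 - y = (p - y * a ^ 2) / a ^ 2 := by field_simp
      rw [this, abs_div, abs_of_pos hA, div_le_iff₀ hA]
      rw [abs_le] at *
      constructor <;> linarith [s1.1, s1.2, e2.1, e2.2]) (by
      have : q / a ^ 2 - 1 = (q - a ^ 2) / a ^ 2 := by field_simp
      rw [this, abs_div, abs_of_pos hA, div_le_iff₀ hA]
      rw [abs_le] at *
      constructor <;> linarith [s2.1, s2.2, e3.1, e3.2])
  have e : p / a ^ 2 / √(q / a ^ 2) = p / (a * √q) := by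
    rw [Real.sqrt_div' _ (by positivity), Real.sqrt_sq hap.le]
    by_cases hq : √q = 0
    · simp [hq]
    · field_simp
  rwa [e] at this

set_option linter.unusedSectionVars false
set_option linter.unusedVariables false

lemma sum_Icc_range (n : ℕ) (f : ℕ → ℝ) : ∑ i ∈ Finset.Icc 1 n, f i = ∑ j ∈ Finset.range n, f (j + 1) := by
  rw [Finset.range_eq_Ico, Finset.sum_Ico_add' f 0 n 1]
  rfl

lemma Bsq_pos {Ω : Type} [mΩ : MeasurableSpace Ω] {P : Measure Ω} (A : MDS Ω P) : 0 < A.Bsq := by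
  unfold MDS.Bsq
  refine Finset.sum_pos (fun i hi => ?_) ⟨1, ?_⟩
  · rw [Finset.mem_Icc] at hi
    exact A.var_pos i hi.1 hi.2
  · rw [Finset.mem_Icc]; exact ⟨le_rfl, A.npos⟩

lemma condExp_scale {Ω : Type} [mΩ : MeasurableSpace Ω] {P : Measure Ω} (k : ℝ) (f : Ω → ℝ)
    (m : MeasurableSpace Ω) : P[fun ω => k * f ω|m] =ᵐ[P] fun ω => k * (P[f|m]) ω :=
  condExp_smul k f m

lemma setup_of_MDS {Ω : Type} [mΩ : MeasurableSpace Ω] {P : Measure Ω} [IsProbabilityMeasure P]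
    (A : MDS Ω P) (ρ δ ε a : ℝ) (hρ : 0 < ρ) (h1 : A.CondA1 δ) (h2 : A.CondA2 ρ ε) (ha : 0 < a) :
    Setup P A.F A.n (fun j ω => a / √A.Bsq * A.X (j + 1) ω) ρ a (max (δ ^ 2) ((a * ε) ^ ρ)) := by
  have hB := Bsq_pos A
  set b := a / √A.Bsq with hb
  have hbp : 0 < b := by positivity
  have hb2 : b ^ 2 * A.Bsq = a ^ 2 := by
    rw [hb, div_pow, Real.sq_sqrt hB.le]; field_simp
  have esq : ∀ j, (fun ω => (b * A.X (j + 1) ω) ^ 2) = fun ω => b ^ 2 * (A.X (j + 1) ω) ^ 2 := by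
    intro j; ext ω; ring
  have eρ : ∀ j, (fun ω => |b * A.X (j + 1) ω| ^ (2 + ρ)) =
      fun ω => b ^ (2 + ρ) * |A.X (j + 1) ω| ^ (2 + ρ) := by
    intro j; ext ω; rw [abs_mul, abs_of_pos hbp, Real.mul_rpow hbp.le (abs_nonneg _)]
  obtain ⟨-, -, h1⟩ := h1
  obtain ⟨hε, -, hIneq, h2⟩ := h2
  have hA2 : 0 ≤ a ^ 2 := by positivity
  refine ⟨A.F_mono, A.F_le, fun j hj => ?_, fun j hj => ?_, fun j hj => ?_, fun j hj => ?_, ha, ?_, ?_⟩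
  · exact (A.meas (j + 1) (by omega) (by omega)).const_mul _
  · rw [esq]; exact (A.sq_int (j + 1) (by omega) (by omega)).const_mul _
  · rw [eρ]; exact (hIneq (j + 1) (by omega) (by omega)).const_mul _
  · have := A.mean_zero (j + 1) (by omega) (by omega)
    simp only [Nat.add_sub_cancel] at this
    filter_upwards [condExp_scale b (A.X (j + 1)) (A.F j), this] with ω e1 e2
    rw [e1, e2]; simp
  · have hs : ∀ᵐ ω ∂P, ∀ j, (P[fun ω => (b * A.X (j + 1) ω) ^ 2|A.F j]) ω =
        b ^ 2 * (P[fun ω => (A.X (j + 1) ω) ^ 2|A.F j]) ω := by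
      rw [ae_all_iff]; intro j; rw [esq]; exact condExp_scale _ _ _
    filter_upwards [h1, hs] with ω h1 hs
    simp only [hs]
    rw [← Finset.mul_sum]
    unfold MDS.CV at h1
    rw [sum_Icc_range] at h1
    simp only [Nat.add_sub_cancel] at h1
    rw [← hb2, ← mul_sub, abs_mul, abs_of_pos (by positivity : (0:ℝ) < b ^ 2)]
    have := le_max_left (δ ^ 2) ((a * ε) ^ ρ)
    calc _ ≤ b ^ 2 * (δ ^ 2 * A.Bsq) := by gcongr
      _ = δ ^ 2 * (b ^ 2 * A.Bsq) := by ring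
      _ ≤ _ := by gcongr
  · have hs : ∀ᵐ ω ∂P, ∀ j, (P[fun ω => |b * A.X (j + 1) ω| ^ (2 + ρ)|A.F j]) ω =
        b ^ (2 + ρ) * (P[fun ω => |A.X (j + 1) ω| ^ (2 + ρ)|A.F j]) ω := by
      rw [ae_all_iff]; intro j; rw [eρ]; exact condExp_scale _ _ _
    filter_upwards [h2, hs] with ω h2 hs
    simp only [hs]
    rw [← Finset.mul_sum]
    rw [sum_Icc_range] at h2
    simp only [Nat.add_sub_cancel] at h2
    have e : b ^ (2 + ρ) * (ε ^ ρ * A.Bsq ^ ((2 + ρ) / 2)) = (a * ε) ^ ρ * a ^ 2 := by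
      have q1 : A.Bsq ^ ((2 + ρ) / 2) = (√A.Bsq) ^ (2 + ρ) := by
        rw [Real.sqrt_eq_rpow, ← Real.rpow_mul hB.le]; congr 1; ring
      have q2 : b ^ (2 + ρ) * (√A.Bsq) ^ (2 + ρ) = a ^ (2 + ρ) := by
        rw [← Real.mul_rpow hbp.le (by positivity), hb]; congr 1; field_simp
      rw [q1, Real.mul_rpow ha.le hε.le]
      rw [show a ^ (2 + ρ) = a ^ 2 * a ^ ρ by rw [Real.rpow_add ha, Real.rpow_two]] at q2
      linear_combination ε ^ ρ * q2
    have := le_max_right (δ ^ 2) ((a * ε) ^ ρ)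
    calc _ ≤ b ^ (2 + ρ) * (ε ^ ρ * A.Bsq ^ ((2 + ρ) / 2)) := by gcongr
      _ = _ := e
      _ ≤ _ := by gcongr

lemma W_eq {Ω : Type} [mΩ : MeasurableSpace Ω] {P : Measure Ω} (A : MDS Ω P) (a : ℝ) (ha : 0 < a)
    (ω : Ω) : (∑ j ∈ Finset.range A.n, a / √A.Bsq * A.X (j + 1) ω) /
      (a * √(∑ j ∈ Finset.range A.n, (a / √A.Bsq * A.X (j + 1) ω) ^ 2)) = A.W ω / a := by
  have hB := Bsq_pos A
  set b := a / √A.Bsq with hb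
  have hbp : 0 < b := by positivity
  unfold MDS.W MDS.S MDS.QV
  rw [sum_Icc_range, sum_Icc_range]
  simp only [mul_pow]
  rw [← Finset.mul_sum, ← Finset.mul_sum, Real.sqrt_mul (by positivity), Real.sqrt_sq hbp.le]
  generalize ∑ j ∈ Finset.range A.n, A.X (j + 1) ω = p
  generalize √(∑ j ∈ Finset.range A.n, A.X (j + 1) ω ^ 2) = q
  by_cases hq : q = 0
  · simp [hq]
  · field_simp

set_option linter.unusedSectionVars false
set_option linter.unusedVariables false

lemma log_lower {Ω : Type} [mΩ : MeasurableSpace Ω] {P : Measure Ω} [IsProbabilityMeasure P]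
    (s : Set Ω) (A t : ℝ) (hA : 0 < A) (h : Real.exp (-(A * t)) ≤ P.real s) :
    ((-t : ℝ) : EReal) ≤ ((A⁻¹ : ℝ) : EReal) * ENNReal.log (P s) := by
  have h1 : ((-(A * t) : ℝ) : EReal) ≤ ENNReal.log (P s) := by
    have := ENNReal.log_le_log (ENNReal.ofReal_le_ofReal h)
    rwa [ENNReal.log_ofReal_of_pos (Real.exp_pos _), Real.log_exp, ofReal_measureReal] at this
  have h2 := mul_le_mul_of_nonneg_left h1 (EReal.coe_nonneg.2 (inv_nonneg.2 hA.le))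
  rw [← EReal.coe_mul] at h2
  refine le_trans (le_of_eq ?_) h2
  congr 1; field_simp

lemma log_upper {Ω : Type} [mΩ : MeasurableSpace Ω] {P : Measure Ω} [IsProbabilityMeasure P]
    (s : Set Ω) (A t C : ℝ) (hA : 0 < A) (hC : 0 < C) (h : P.real s ≤ C * Real.exp (-(A * t))) :
    ((A⁻¹ : ℝ) : EReal) * ENNReal.log (P s) ≤ ((Real.log C / A - t : ℝ) : EReal) := by
  have h1 : ENNReal.log (P s) ≤ ((Real.log C - (A * t) : ℝ) : EReal) := by
    have := ENNReal.log_le_log (ENNReal.ofReal_le_ofReal h)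
    rw [ofReal_measureReal, ENNReal.log_ofReal_of_pos (mul_pos hC (Real.exp_pos _)),
      Real.log_mul hC.ne' (Real.exp_pos _).ne', Real.log_exp] at this
    exact this
  have h2 := mul_le_mul_of_nonneg_left h1 (EReal.coe_nonneg.2 (inv_nonneg.2 hA.le))
  rw [← EReal.coe_mul] at h2
  refine le_trans h2 (le_of_eq ?_)
  congr 1; field_simp

theorem self_normalized_MDP :
    ∀ (Ω : Type) [MeasurableSpace Ω] (P : Measure Ω), IsProbabilityMeasure P →
      ∀ (A : ℕ → MDS Ω P) (δ ε κ : ℕ → ℝ) (ρ : ℝ), 0 < ρ →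
        (∀ n, (A n).CondA1 (δ n)) →
        (∀ n, (A n).CondA2 ρ (ε n)) →
        (∀ n, (A n).CondA3 (κ n)) →
        Tendsto (fun n => max (δ n) (max (ε n) (κ n))) atTop (nhds 0) →
        ∀ a : ℕ → ℝ, Tendsto a atTop atTop →
          Tendsto (fun n => a n * ε n) atTop (nhds 0) →
          ∀ B : Set ℝ, MeasurableSet B →
            -(⨅ y ∈ interior B, ((y ^ 2 / 2 : ℝ) : EReal)) ≤
                Filter.liminf (fun n => (((a n ^ 2)⁻¹ : ℝ) : EReal) *
                  ENNReal.log (P {ω | (A n).W ω / a n ∈ B})) atTop ∧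
              Filter.limsup (fun n => (((a n ^ 2)⁻¹ : ℝ) : EReal) *
                  ENNReal.log (P {ω | (A n).W ω / a n ∈ B})) atTop ≤
                -(⨅ y ∈ closure B, ((y ^ 2 / 2 : ℝ) : EReal)) := by
  intro Ω mΩ P hP A δ ε κ ρ hρ h1 h2 h3 hmax a ha haε B hB
  have hapos : ∀ᶠ n in atTop, 0 < a n := ha.eventually_gt_atTop 0
  have hδ : Tendsto δ atTop (𝓝 0) :=
    squeeze_zero (fun n => (h1 n).1) (fun n => le_max_left _ _) hmax
  have hd : Tendsto (fun n => max (δ n ^ 2) ((a n * ε n) ^ ρ)) atTop (𝓝 0) := by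
    have e1 : Tendsto (fun n => δ n ^ 2) atTop (𝓝 0) := by simpa using hδ.pow 2
    have e2 : Tendsto (fun n => (a n * ε n) ^ ρ) atTop (𝓝 0) := by
      have := haε.rpow_const (p := ρ) (Or.inr hρ.le)
      rwa [Real.zero_rpow hρ.ne'] at this
    simpa using e1.max e2
  have hsq : Tendsto (fun n => a n ^ 2) atTop atTop := (tendsto_pow_atTop (by norm_num)).comp ha
  constructor
  · rw [EReal.neg_le]
    refine le_iInf₂ fun y hy => ?_
    rw [EReal.neg_le]
    refine EReal.ge_of_forall_gt_iff_ge.1 fun t ht => ?_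
    rw [← EReal.coe_neg, EReal.coe_lt_coe_iff] at ht
    obtain ⟨r, hr, hrB⟩ := Metric.isOpen_iff.1 isOpen_interior y hy
    obtain ⟨d0, a0, hd0, H⟩ := core_lower ρ hρ y r (-(y ^ 2 / 2) - t) hr (by linarith)
    refine le_liminf_of_le (h := ?_)
    filter_upwards [hapos, hd.eventually_le_const hd0, ha.eventually_ge_atTop a0] with n p1 p2 p3
    have := H Ω P _ _ _ (a n) _ (setup_of_MDS (A n) ρ (δ n) (ε n) (a n) hρ (h1 n) (h2 n) p1) p2 p3
    simp only [W_eq (A n) (a n) p1] at this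
    have h5 : P.real {ω | |(A n).W ω / a n - y| < r} ≤ P.real {ω | (A n).W ω / a n ∈ B} := by
      refine measureReal_mono fun ω hω => ?_
      show (A n).W ω / a n ∈ B
      exact interior_subset (hrB (by rw [Metric.mem_ball, Real.dist_eq]; exact hω))
    have := log_lower _ (a n ^ 2) (y ^ 2 / 2 + (-(y ^ 2 / 2) - t)) (by positivity) (this.trans h5)
    refine le_trans (le_of_eq ?_) this
    congr 1; ring
  · refine EReal.le_of_forall_lt_iff_le.1 fun w hw => ?_
    rcases le_or_gt 0 w with h0 | h0
    · refine limsup_le_of_le (h := Eventually.of_forall fun n => ?_)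
      refine le_trans (mul_nonpos_of_nonneg_of_nonpos (EReal.coe_nonneg.2 (by positivity))
        (ENNReal.log_le_zero_iff.2 prob_le_one)) (EReal.coe_nonneg.2 h0)
    obtain ⟨w', hw1, hw2⟩ := EReal.lt_iff_exists_real_btwn.1 hw
    rw [EReal.coe_lt_coe_iff] at hw2
    have hall : ∀ y ∈ B, -w' ≤ y ^ 2 / 2 := by
      intro y hy
      have := EReal.neg_le.1 hw1.le
      have := this.trans (iInf₂_le y (subset_closure hy))
      rwa [← EReal.coe_neg, EReal.coe_le_coe_iff] at this
    obtain ⟨d0, hd0, H⟩ := core_upper ρ hρ (√(2 * -w')) ((w - w') / 2)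
      (Real.sqrt_pos.2 (by linarith)) (by linarith)
    refine limsup_le_of_le (h := ?_)
    filter_upwards [hapos, hd.eventually_le_const hd0,
      hsq.eventually_ge_atTop (Real.log 6 / ((w - w') / 2))] with n p1 p2 p3
    have S := setup_of_MDS (A n) ρ (δ n) (ε n) (a n) hρ (h1 n) (h2 n) p1
    have u1 := H Ω P _ _ _ (a n) _ S p2
    have u2 := H Ω P _ _ _ (a n) _ S.neg p2
    simp only [neg_sq, Finset.sum_neg_distrib, neg_div, W_eq (A n) (a n) p1] at u1 u2
    have h5 : P.real {ω | (A n).W ω / a n ∈ B} ≤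
        6 * Real.exp (-(a n ^ 2 * ((√(2 * -w')) ^ 2 / 2 - (w - w') / 2))) := by
      have : {ω | (A n).W ω / a n ∈ B} ⊆ {ω | √(2 * -w') ≤ (A n).W ω / a n} ∪
          {ω | √(2 * -w') ≤ -((A n).W ω / a n)} := by
        intro ω hω
        have h6 := hall _ hω
        have h7 : √(2 * -w') ≤ |(A n).W ω / a n| := by
          rw [Real.sqrt_le_left (abs_nonneg _), sq_abs]; linarith
        exact le_abs.1 h7
      have := (measureReal_mono (μ := P) this).trans (measureReal_union_le _ _)
      linarith
    have hA : 0 < a n ^ 2 := by positivity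
    have := log_upper _ (a n ^ 2) _ 6 hA (by norm_num) h5
    refine this.trans (EReal.coe_le_coe_iff.2 ?_)
    rw [Real.sq_sqrt (by linarith)]
    have : Real.log 6 / a n ^ 2 ≤ (w - w') / 2 := by
      rw [div_le_iff₀ (by linarith)] at p3
      rw [div_le_iff₀ hA]; linarith
    linarith
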